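/- Under the standing assumptions, and assuming in addition that ∂Ω is uniformly n-rectifiable, the family Top satisfies the Carleson packing condition ∑_{R ∈ Top} μ(R) ≤ M(ε) μ(R₀), where M(ε) depends only on ε, n, A, the AD-regularity and uniform rectifiability constants of ∂Ω, and the weak-A∞ constants in B_{R₀}. -/

import Mathlib

open Metric MeasureTheory Set Filter Topology

noncomputable section

/-- Euclidean space `ℝ^d`. -/
abbrev Euc (d : ℕ) : Type := EuclideanSpace ℝ (Fin d)

namespace HarmMeas

/-- Distance between two sets. -/
def setD {d : ℕ} (s t : Set (Euc d)) : ℝ := sInf (Set.image2 dist s t)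

/-- A continuous function is subharmonic on `U` if it satisfies the sub-mean-value
property on every ball whose closure is contained in `U`. -/
def SubharmonicOn {d : ℕ} (u : Euc d → ℝ) (U : Set (Euc d)) : Prop :=
  ContinuousOn u U ∧ ∀ x ∈ U, ∀ r : ℝ, 0 < r → closedBall x r ⊆ U →
    u x ≤ ⨍ y in ball x r, u y

/-- Harmonic (continuous) functions: both `u` and `-u` are subharmonic. -/
def HarmonicOnS {d : ℕ} (u : Euc d → ℝ) (U : Set (Euc d)) : Prop :=
  SubharmonicOn u U ∧ SubharmonicOn (fun y => -u y) U

/-- The upper (Perron) class associated to boundary data `f` on the open set `Ω`: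
superharmonic functions on `Ω`, bounded below, whose liminf at each boundary point
dominates `f` there. -/
def upperFamily {d : ℕ} (Ω : Set (Euc d)) (f : Euc d → ℝ) : Set (Euc d → ℝ) :=
  {u | SubharmonicOn (fun y => -u y) Ω ∧ BddBelow (u '' Ω) ∧
       ∀ ξ ∈ frontier Ω, f ξ ≤ Filter.liminf u (nhdsWithin ξ Ω)}

/-- The (upper) Perron solution of the Dirichlet problem in `Ω` with boundary data `f`,
evaluated at `p`. -/
def perron {d : ℕ} (Ω : Set (Euc d)) (f : Euc d → ℝ) (p : Euc d) : ℝ :=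
  sInf ((fun u => u p) '' upperFamily Ω f)

/-- Harmonic measure `ω^p(A)` of `A` for the open set `Ω` with pole `p`: the value at `p`
of the Perron solution with boundary data the characteristic function of `A`. -/
def hMeasure {d : ℕ} (Ω : Set (Euc d)) (p : Euc d) (A : Set (Euc d)) : ℝ :=
  perron Ω (A.indicator fun _ => 1) p

/-- The Green function `g(p,x)` of `Ω ⊆ ℝ^{n+1}` with pole `p`: the fundamental solution
`|x-p|^{1-n}` minus the Perron solution with the fundamental solution as boundary data. -/
def greenFn (n : ℕ) (Ω : Set (Euc (n+1))) (p x : Euc (n+1)) : ℝ :=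
  ‖x - p‖ ^ ((1 : ℤ) - n) - perron Ω (fun ξ => ‖ξ - p‖ ^ ((1 : ℤ) - n)) x

/-- `F ⊆ ℝ^{n+1}` is `n`-AD-regular with constant `C₀`. -/
def ADRegular (n : ℕ) (C₀ : ℝ) (F : Set (Euc (n+1))) : Prop :=
  ∀ x ∈ F, ∀ r : ℝ, 0 < r → ENNReal.ofReal r ≤ EMetric.diam F →
    ENNReal.ofReal (C₀⁻¹ * r ^ n) ≤ μH[n] (F ∩ ball x r) ∧
      μH[n] (F ∩ ball x r) ≤ ENNReal.ofReal (C₀ * r ^ n)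

/-- A `λ`-carrot curve from `x` to `y` in `Ω`: a curve `γ ⊆ Ω ∪ {y}` with endpoints `x`
and `y` such that `dist(z, ∂Ω) ≥ λ ⋅ ℋ¹(γ(y,z))` for every point `z = γ(t)` of the curve,
where `γ(y,z)` is the arc of `γ` between `y` and `z`. -/
def CarrotCurve {d : ℕ} (Ω : Set (Euc d)) (lam : ℝ) (x y : Euc d) : Prop :=
  ∃ γ : ℝ → Euc d, ContinuousOn γ (Icc 0 1) ∧ γ 0 = x ∧ γ 1 = y ∧
    γ '' Icc 0 1 ⊆ Ω ∪ {y} ∧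
    ∀ t ∈ Icc (0:ℝ) 1,
      ENNReal.ofReal lam * μH[1] (γ '' Icc t 1) ≤
        ENNReal.ofReal (infDist (γ t) (frontier Ω))

/-- A `C`-good Harnack chain from `x ∈ Ω` to `y ∈ cl Ω`, all of whose balls are moreover
contained in the set `W`: consecutive balls meet, each ball has radius comparable (with
constant `C`) to its distance to `∂Ω`, radii are quasi-monotone, and for each `t > 0`
there are at most `C` balls of radius in `(t, 2t]`.  If `y ∈ Ω` the chain is finite and
`y` lies in its last ball; if `y ∈ ∂Ω` the chain is infinite and the balls converge
to `y`. -/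
def GoodChainIn {d : ℕ} (Ω W : Set (Euc d)) (C : ℝ) (x y : Euc d) : Prop :=
  (y ∈ Ω ∧ ∃ (N : ℕ) (c : ℕ → Euc d) (r : ℕ → ℝ),
    x ∈ ball (c 0) (r 0) ∧ y ∈ ball (c N) (r N) ∧
    (∀ j ≤ N, 0 < r j ∧ ball (c j) (r j) ⊆ Ω ∩ W) ∧
    (∀ j < N, (ball (c j) (r j) ∩ ball (c (j+1)) (r (j+1))).Nonempty) ∧
    (∀ j ≤ N, C⁻¹ * setD (ball (c j) (r j)) (frontier Ω) ≤ r j ∧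
      r j ≤ C * setD (ball (c j) (r j)) (frontier Ω)) ∧
    (∀ i j, i ≤ N → j ≤ N → i < j → r j ≤ C * r i) ∧
    (∀ t : ℝ, 0 < t →
      {j | j ≤ N ∧ t < r j ∧ r j ≤ 2 * t}.Finite ∧
      (Nat.card {j | j ≤ N ∧ t < r j ∧ r j ≤ 2 * t} : ℝ) ≤ C))
  ∨ (y ∈ frontier Ω ∧ ∃ (c : ℕ → Euc d) (r : ℕ → ℝ),
    x ∈ ball (c 0) (r 0) ∧
    Filter.Tendsto (fun j => infDist y (ball (c j) (r j))) atTop (nhds 0) ∧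
    (∀ j, 0 < r j ∧ ball (c j) (r j) ⊆ Ω ∩ W) ∧
    (∀ j, (ball (c j) (r j) ∩ ball (c (j+1)) (r (j+1))).Nonempty) ∧
    (∀ j, C⁻¹ * setD (ball (c j) (r j)) (frontier Ω) ≤ r j ∧
      r j ≤ C * setD (ball (c j) (r j)) (frontier Ω)) ∧
    (∀ i j : ℕ, i < j → r j ≤ C * r i) ∧
    (∀ t : ℝ, 0 < t →
      {j | t < r j ∧ r j ≤ 2 * t}.Finite ∧
      (Nat.card {j | t < r j ∧ r j ≤ 2 * t} : ℝ) ≤ C))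

/-- A `C`-good Harnack chain from `x` to `y`. -/
def GoodChain {d : ℕ} (Ω : Set (Euc d)) (C : ℝ) (x y : Euc d) : Prop :=
  GoodChainIn Ω Set.univ C x y


/-- The harmonic measure of the open set `Ω` satisfies the weak-`A∞` condition: for every
`ε₀ ∈ (0,1)` there is `δ₀ ∈ (0,1)` such that for every ball `B` centered on `∂Ω`, every
pole `p ∈ Ω \ 4B` and every Borel `E ⊆ B ∩ ∂Ω`, `ℋⁿ(E) ≤ δ₀ ℋⁿ(B ∩ ∂Ω)` implies
`ω^p(E) ≤ ε₀ ω^p(2B)`. -/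
def WeakAInfty (n : ℕ) (Ω : Set (Euc (n+1))) : Prop :=
  ∀ ε₀ ∈ Set.Ioo (0:ℝ) 1, ∃ δ₀ ∈ Set.Ioo (0:ℝ) 1,
    ∀ x₀ ∈ frontier Ω, ∀ r₀ : ℝ, 0 < r₀ →
      ∀ p ∈ Ω \ closedBall x₀ (4 * r₀),
        ∀ A : Set (Euc (n+1)), MeasurableSet A → A ⊆ ball x₀ r₀ ∩ frontier Ω →
          μH[n] A ≤ ENNReal.ofReal δ₀ * μH[n] (ball x₀ r₀ ∩ frontier Ω) →
          hMeasure Ω p A ≤ ε₀ * hMeasure Ω p (ball x₀ (2 * r₀))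

/-- `ω^p` satisfies the weak-`A∞` condition in the ball `B(x₀,r₀)`, with gauge `D`
(i.e. `δ₀ = D ε₀` is a witness for each `ε₀ ∈ (0,1)`). -/
def WeakAInftyBallWith (n : ℕ) (Ω : Set (Euc (n+1))) (p x₀ : Euc (n+1)) (r₀ : ℝ)
    (D : ℝ → ℝ) : Prop :=
  ∀ ε₀ ∈ Set.Ioo (0:ℝ) 1, D ε₀ ∈ Set.Ioo (0:ℝ) 1 ∧
    ∀ A : Set (Euc (n+1)), MeasurableSet A → A ⊆ ball x₀ r₀ ∩ frontier Ω →
      μH[n] A ≤ ENNReal.ofReal (D ε₀) * μH[n] (ball x₀ r₀ ∩ frontier Ω) →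
      hMeasure Ω p A ≤ ε₀ * hMeasure Ω p (ball x₀ (2 * r₀))

/-- The weak local John condition for `Ω ⊆ ℝ^{n+1}`: there are `λ, θ ∈ (0,1)` and `Λ ≥ 2`
such that every `x ∈ Ω` sees (through `λ`-carrot curves) a Borel subset `F` of
`B(x, Λ δ_Ω(x)) ∩ ∂Ω` of surface measure at least `θ ℋⁿ(B(x, Λ δ_Ω(x)) ∩ ∂Ω)`. -/
def WeakLocalJohn (n : ℕ) (Ω : Set (Euc (n+1))) : Prop :=
  ∃ lam ∈ Set.Ioo (0:ℝ) 1, ∃ θ ∈ Set.Ioo (0:ℝ) 1, ∃ Λ : ℝ, 2 ≤ Λ ∧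
    ∀ x ∈ Ω, ∃ F : Set (Euc (n+1)), MeasurableSet F ∧
      F ⊆ ball x (Λ * infDist x (frontier Ω)) ∩ frontier Ω ∧
      ENNReal.ofReal θ * μH[n] (ball x (Λ * infDist x (frontier Ω)) ∩ frontier Ω) ≤
        μH[n] F ∧
      ∀ y ∈ F, CarrotCurve Ω lam x y

/-- The corkscrew condition for `Ω`. -/
def CorkscrewCond {d : ℕ} (Ω : Set (Euc d)) : Prop :=
  ∃ c > (0:ℝ), ∀ x ∈ frontier Ω, ∀ ρ : ℝ, 0 < ρ → ENNReal.ofReal ρ ≤ EMetric.diam Ω →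
    ∃ (y : Euc d) (r : ℝ), c * ρ ≤ r ∧ ball y r ⊆ ball x ρ ∩ Ω

/-- `F ⊆ ℝ^{n+1}` is uniformly `n`-rectifiable, with AD-regularity constant `C₀` and
big-pieces-of-Lipschitz-images constants `θ`, `M`. -/
def UnifRectifiable (n : ℕ) (C₀ θ M : ℝ) (F : Set (Euc (n+1))) : Prop :=
  ADRegular n C₀ F ∧ 0 < θ ∧ 0 < M ∧
    ∀ x ∈ F, ∀ r : ℝ, 0 < r → ENNReal.ofReal r ≤ EMetric.diam F →
      ∃ g : Euc n → Euc (n+1), LipschitzOnWith (Real.toNNReal M) g (ball 0 r) ∧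
        ENNReal.ofReal (θ * r ^ n) ≤ μH[n] (F ∩ ball x r ∩ g '' ball 0 r)

/-- The set `WA(p,Λ)` of boundary points `x ∈ B(p, 10 δ_Ω(p)) ∩ ∂Ω` at which the harmonic
measure `ω^p` is comparable (with constant `Λ`) to the normalized surface measure
`μ(B(x,r))/μ(B(x,δ_Ω(p)))` at every scale `0 < r ≤ δ_Ω(p)`. -/
def WAset (n : ℕ) (Ω : Set (Euc (n+1))) (p : Euc (n+1)) (Λ : ℝ) : Set (Euc (n+1)) :=
  {x | x ∈ ball p (10 * infDist p (frontier Ω)) ∩ frontier Ω ∧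
    ∀ r : ℝ, 0 < r → r ≤ infDist p (frontier Ω) →
      Λ⁻¹ * ((μH[n] (frontier Ω ∩ ball x r)).toReal /
          (μH[n] (frontier Ω ∩ ball x (infDist p (frontier Ω)))).toReal) ≤
        hMeasure Ω p (ball x r) ∧
      hMeasure Ω p (ball x r) ≤
        Λ * ((μH[n] (frontier Ω ∩ ball x r)).toReal /
          (μH[n] (frontier Ω ∩ ball x (infDist p (frontier Ω)))).toReal)}


/-- A David–Semmes dyadic lattice associated to a measure `μ` supported on the set `F`,
with comparability constant `Cl`: for each generation `j ∈ ℤ` a partition of `F` into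
Borel "cubes" of side length `2^{-j}`, nested across generations, with
`diam Q ≤ ℓ(Q)`, `μ(Q) ≈ ℓ(Q)ⁿ`, centers deep inside the cubes, and small boundaries. -/
structure DSLattice (n : ℕ) (F : Set (Euc (n+1))) (μ : Measure (Euc (n+1))) (Cl : ℝ) where
  cube : ℤ → Set (Set (Euc (n+1)))
  center : Set (Euc (n+1)) → Euc (n+1)
  one_le_Cl : 1 ≤ Cl
  subset_F : ∀ j, ∀ Q ∈ cube j, Q ⊆ F
  nonempty : ∀ j, ∀ Q ∈ cube j, Q.Nonempty
  measurableSet : ∀ j, ∀ Q ∈ cube j, MeasurableSet Q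
  cover : ∀ j : ℤ, ENNReal.ofReal ((2:ℝ) ^ (-j)) ≤ EMetric.diam F →
    ∀ x ∈ F, ∃ Q ∈ cube j, x ∈ Q
  disj : ∀ j, ∀ Q ∈ cube j, ∀ Q' ∈ cube j, Q ≠ Q' → Disjoint Q Q'
  nested : ∀ j k : ℤ, k ≤ j → ∀ Q ∈ cube j, ∀ Q' ∈ cube k, (Q ∩ Q').Nonempty → Q ⊆ Q'
  diam_le : ∀ j, ∀ Q ∈ cube j, EMetric.diam Q ≤ ENNReal.ofReal ((2:ℝ) ^ (-j))
  measure_lb : ∀ j, ∀ Q ∈ cube j, ENNReal.ofReal (Cl⁻¹ * ((2:ℝ) ^ (-j)) ^ n) ≤ μ Q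
  measure_ub : ∀ j, ∀ Q ∈ cube j, μ Q ≤ ENNReal.ofReal (Cl * ((2:ℝ) ^ (-j)) ^ n)
  center_mem : ∀ j, ∀ Q ∈ cube j, center Q ∈ Q
  center_far : ∀ j, ∀ Q ∈ cube j, ∀ y ∈ F \ Q, Cl⁻¹ * (2:ℝ) ^ (-j) ≤ dist (center Q) y
  small_boundary : ∀ j, ∀ Q ∈ cube j, ∀ τ : ℝ, 0 < τ → τ < 1 →
    μ {x ∈ Q | infDist x (F \ Q) ≤ τ * (2:ℝ) ^ (-j)} +
        μ {x ∈ F \ Q | infDist x Q ≤ τ * (2:ℝ) ^ (-j)} ≤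
      ENNReal.ofReal (Cl * τ ^ (1 / Cl) * ((2:ℝ) ^ (-j)) ^ n)

/-- A cube of the lattice, recorded together with its generation. -/
abbrev Cube (n : ℕ) : Type := ℤ × Set (Euc (n+1))

/-- Membership of a (generation, cube) pair in the lattice. -/
def DSLattice.mem {n : ℕ} {F : Set (Euc (n+1))} {μ : Measure (Euc (n+1))} {Cl : ℝ}
    (L : DSLattice n F μ Cl) (q : Cube n) : Prop := q.2 ∈ L.cube q.1

/-- Side length `ℓ(Q) = 2^{-j}` of a cube of generation `j`. -/
def sideLen {n : ℕ} (q : Cube n) : ℝ := (2:ℝ) ^ (-q.1)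

/-- The ball `t·B_Q = B(z_Q, t · 4 ℓ(Q))` associated to the cube `q`. -/
def cubeBall {n : ℕ} {F : Set (Euc (n+1))} {μ : Measure (Euc (n+1))} {Cl : ℝ}
    (L : DSLattice n F μ Cl) (t : ℝ) (q : Cube n) : Set (Euc (n+1)) :=
  ball (L.center q.2) (t * (4 * sideLen q))

/-- The dilated cube `λQ = {x ∈ F : dist(x,Q) ≤ (λ-1) ℓ(Q)}`. -/
def dilCube {n : ℕ} (F : Set (Euc (n+1))) (lam : ℝ) (q : Cube n) : Set (Euc (n+1)) :=
  {x ∈ F | infDist x q.2 ≤ (lam - 1) * sideLen q}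

/-- The bilateral beta coefficient `bβ_F(B(x,r))`: infimum over affine `n`-planes `L`
meeting `B(x,r)` of `r⁻¹ (sup_{y ∈ F ∩ B} dist(y,L) + sup_{y ∈ L ∩ B} dist(y,F))`. -/
def bbeta (n : ℕ) (F : Set (Euc (n+1))) (x : Euc (n+1)) (r : ℝ) : ℝ :=
  sInf {t | ∃ L : AffineSubspace ℝ (Euc (n+1)),
    Module.finrank ℝ L.direction = n ∧ ((L : Set (Euc (n+1))) ∩ ball x r).Nonempty ∧
    t = r⁻¹ * ((⨆ y ∈ F ∩ ball x r, infDist y (L : Set (Euc (n+1)))) +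
      ⨆ y ∈ (L : Set (Euc (n+1))) ∩ ball x r, infDist y F)}

/-- `q` belongs to `D_μ(R)`: a lattice cube contained in `R` of generation at least that
of `R`. -/
def InD {n : ℕ} {F : Set (Euc (n+1))} {μ : Measure (Euc (n+1))} {Cl : ℝ}
    (L : DSLattice n F μ Cl) (R q : Cube n) : Prop :=
  L.mem q ∧ q.2 ⊆ R.2 ∧ R.1 ≤ q.1

section Corona
variable {n : ℕ} {F : Set (Euc (n+1))} {μ : Measure (Euc (n+1))} {Cl : ℝ}

/-- The harmonic-measure density `ω^p(λQ)/μ(λQ)` of the dilated cube `λQ`. -/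
def dens (Ω : Set (Euc (n+1))) (μ : Measure (Euc (n+1))) (p : Euc (n+1)) (lam : ℝ)
    (q : Cube n) : ℝ :=
  hMeasure Ω p (dilCube (frontier Ω) lam q) / (μ (dilCube (frontier Ω) lam q)).toReal

/-- Being a high density cube (before maximality): `ω^p(2Q)/μ(2Q) ≥ A ω^p(2R₀)/μ(2R₀)`. -/
def HDcond (Ω : Set (Euc (n+1))) (μ : Measure (Euc (n+1))) (L : DSLattice n F μ Cl)
    (p : Euc (n+1)) (R₀ : Cube n) (A : ℝ) (q : Cube n) : Prop :=
  L.mem q ∧ q.2 ⊆ R₀.2 ∧ A * dens Ω μ p 2 R₀ ≤ dens Ω μ p 2 q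

/-- Being a low density cube (before maximality): `ω^p(Q)/μ(Q) ≤ A⁻¹ ω^p(R₀)/μ(R₀)`. -/
def LDcond (Ω : Set (Euc (n+1))) (μ : Measure (Euc (n+1))) (L : DSLattice n F μ Cl)
    (p : Euc (n+1)) (R₀ : Cube n) (A : ℝ) (q : Cube n) : Prop :=
  L.mem q ∧ q.2 ⊆ R₀.2 ∧
    hMeasure Ω p q.2 / (μ q.2).toReal ≤ A⁻¹ * (hMeasure Ω p R₀.2 / (μ R₀.2).toReal)

/-- Maximal cubes of the lattice satisfying a given property. -/
def MaximalWith (L : DSLattice n F μ Cl) (P : Cube n → Prop) (q : Cube n) : Prop :=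
  P q ∧ ∀ q' : Cube n, L.mem q' → q'.1 < q.1 → q.2 ⊆ q'.2 → ¬ P q'

/-- The family `HD` of maximal high density cubes contained in `R₀`. -/
def HDfam (Ω : Set (Euc (n+1))) (μ : Measure (Euc (n+1))) (L : DSLattice n F μ Cl)
    (p : Euc (n+1)) (R₀ : Cube n) (A : ℝ) : Set (Cube n) :=
  {q | MaximalWith L (HDcond Ω μ L p R₀ A) q}

/-- The family `LD` of maximal low density cubes contained in `R₀`. -/
def LDfam (Ω : Set (Euc (n+1))) (μ : Measure (Euc (n+1))) (L : DSLattice n F μ Cl)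
    (p : Euc (n+1)) (R₀ : Cube n) (A : ℝ) : Set (Cube n) :=
  {q | MaximalWith L (LDcond Ω μ L p R₀ A) q}

/-- `B_H`, the union of the high density cubes. -/
def BHset (Ω : Set (Euc (n+1))) (μ : Measure (Euc (n+1))) (L : DSLattice n F μ Cl)
    (p : Euc (n+1)) (R₀ : Cube n) (A : ℝ) : Set (Euc (n+1)) :=
  ⋃ q ∈ HDfam Ω μ L p R₀ A, q.2

/-- `B_L`, the union of the low density cubes. -/
def BLset (Ω : Set (Euc (n+1))) (μ : Measure (Euc (n+1))) (L : DSLattice n F μ Cl)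
    (p : Euc (n+1)) (R₀ : Cube n) (A : ℝ) : Set (Euc (n+1)) :=
  ⋃ q ∈ LDfam Ω μ L p R₀ A, q.2

/-- The family `G` of cubes of `D_μ(R₀)` not contained in any high or low density cube. -/
def Gfam (Ω : Set (Euc (n+1))) (μ : Measure (Euc (n+1))) (L : DSLattice n F μ Cl)
    (p : Euc (n+1)) (R₀ : Cube n) (A : ℝ) : Set (Cube n) :=
  {q | InD L R₀ q ∧
    ∀ q' ∈ HDfam Ω μ L p R₀ A ∪ LDfam Ω μ L p R₀ A, ¬ q.2 ⊆ q'.2}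

/-- `bβ(Q) := bβ_{∂Ω}(100 B_Q)`. -/
def bbetaQ (n : ℕ) {F : Set (Euc (n+1))} {μ : Measure (Euc (n+1))} {Cl : ℝ}
    (L : DSLattice n F μ Cl) (G : Set (Euc (n+1))) (q : Cube n) : ℝ :=
  bbeta n G (L.center q.2) (100 * (4 * sideLen q))

/-- `q'` is the dyadic parent of `q`. -/
def IsParent (L : DSLattice n F μ Cl) (q' q : Cube n) : Prop :=
  L.mem q' ∧ q'.1 = q.1 - 1 ∧ q.2 ⊆ q'.2

/-- The stopping condition for the corona decomposition: `Q ∉ G` or `bβ(Q̂) > ε`. -/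
def StopBad (Ω : Set (Euc (n+1))) (μ : Measure (Euc (n+1))) (L : DSLattice n F μ Cl)
    (p : Euc (n+1)) (R₀ : Cube n) (A ε : ℝ) (q : Cube n) : Prop :=
  q ∉ Gfam Ω μ L p R₀ A ∨ ∃ q', IsParent L q' q ∧ ε < bbetaQ n L (frontier Ω) q'

/-- `Stop(R)`: the maximal cubes of `D_μ(R) \ {R}` satisfying the stopping condition. -/
def StopFam (Ω : Set (Euc (n+1))) (μ : Measure (Euc (n+1))) (L : DSLattice n F μ Cl)
    (p : Euc (n+1)) (R₀ : Cube n) (A ε : ℝ) (R : Cube n) : Set (Cube n) :=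
  {q | L.mem q ∧ q.2 ⊆ R.2 ∧ R.1 < q.1 ∧ StopBad Ω μ L p R₀ A ε q ∧
    ∀ q' : Cube n, L.mem q' → q'.2 ⊆ R.2 → R.1 < q'.1 → q'.1 < q.1 → q.2 ⊆ q'.2 →
      ¬ StopBad Ω μ L p R₀ A ε q'}

/-- `Tree(R)`: the cubes of `D_μ(R)` not contained in any cube from `Stop(R)`. -/
def TreeFam (Ω : Set (Euc (n+1))) (μ : Measure (Euc (n+1))) (L : DSLattice n F μ Cl)
    (p : Euc (n+1)) (R₀ : Cube n) (A ε : ℝ) (R : Cube n) : Set (Cube n) :=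
  {q | InD L R q ∧ ∀ s ∈ StopFam Ω μ L p R₀ A ε R, ¬ q.2 ⊆ s.2}

/-- The generations `Top_k` of the corona decomposition. -/
def TopFam (Ω : Set (Euc (n+1))) (μ : Measure (Euc (n+1))) (L : DSLattice n F μ Cl)
    (p : Euc (n+1)) (R₀ : Cube n) (A ε : ℝ) : ℕ → Set (Cube n)
  | 0 => {q | q ∈ Gfam Ω μ L p R₀ A ∧ q.1 = R₀.1 + 10}
  | (k+1) => {q | ∃ R ∈ TopFam Ω μ L p R₀ A ε k,
      q ∈ StopFam Ω μ L p R₀ A ε R ∧ q ∈ Gfam Ω μ L p R₀ A}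

/-- `Top := ⋃_k Top_k`. -/
def TopAll (Ω : Set (Euc (n+1))) (μ : Measure (Euc (n+1))) (L : DSLattice n F μ Cl)
    (p : Euc (n+1)) (R₀ : Cube n) (A ε : ℝ) : Set (Cube n) :=
  {q | ∃ k : ℕ, q ∈ TopFam Ω μ L p R₀ A ε k}

/-- `Tree^{(N)}(R)`: cubes of `Tree(R)` of side length larger than `2^{-N} ℓ(R₀)`. -/
def TreeN (Ω : Set (Euc (n+1))) (μ : Measure (Euc (n+1))) (L : DSLattice n F μ Cl)
    (p : Euc (n+1)) (R₀ : Cube n) (A ε : ℝ) (N : ℕ) (R : Cube n) : Set (Cube n) :=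
  {q | q ∈ TreeFam Ω μ L p R₀ A ε R ∧ q.1 < R₀.1 + N}

/-- `Top_b^{(N)}`: the cubes `R` of `Top` of side length larger than `2^{-N} ℓ(R₀)` with
`Tree(R) ≠ {R}`. -/
def TopbN (Ω : Set (Euc (n+1))) (μ : Measure (Euc (n+1))) (L : DSLattice n F μ Cl)
    (p : Euc (n+1)) (R₀ : Cube n) (A ε : ℝ) (N : ℕ) : Set (Cube n) :=
  {R | R ∈ TopAll Ω μ L p R₀ A ε ∧ R.1 < R₀.1 + N ∧
    ∃ q ∈ TreeFam Ω μ L p R₀ A ε R, q ≠ R}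

end Corona



/-- Covering comparison. -/
lemma cov_le {X : Type*} [PseudoMetricSpace X] [MeasurableSpace X] [OpensMeasurableSpace X]
    [SecondCountableTopology X] (ν : Measure X) (n : ℕ) {Cu cl H β t : ℝ} (hCu : 0 < Cu)
    (hcl : 0 < cl) (hH : 0 ≤ H) (hβ : 0 < β) (ht : 0 < t) (S W : Set X)
    (hub : ∀ x : X, ∀ s : ℝ, 0 < s → ν (closedBall x s) ≤ ENNReal.ofReal (Cu * s ^ n))
    (h : ∀ s ∈ S, ∃ y, dist y s ≤ H * t ∧ ball y (β * t) ⊆ W ∧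
      ENNReal.ofReal (cl * (β * t) ^ n) ≤ ν (ball y (β * t))) :
    ν S ≤ ENNReal.ofReal (Cu * (5 * (H + β)) ^ n / (cl * β ^ n)) * ν W := by
  choose! y hy1 hy2 hy3 using h
  obtain ⟨u, huS, hud, hucov⟩ := Vitali.exists_disjoint_subfamily_covering_enlargement_closedBall
    S (fun x => x) (fun _ => (H + β) * t) ((H + β) * t) (fun _ _ => le_rfl) 5 (by norm_num)
  have hsub : ∀ b ∈ u, ball (y b) (β * t) ⊆ closedBall b ((H + β) * t) := by
    intro b hb z hz
    have h1 := hy1 b (huS hb)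
    rw [mem_ball] at hz
    rw [mem_closedBall]
    have := dist_triangle z (y b) b
    nlinarith
  have hdis : u.PairwiseDisjoint fun b => ball (y b) (β * t) := by
    intro a ha b hb hab
    exact (hud ha hb hab).mono (hsub a ha) (hsub b hb)
  have hcount : u.Countable := hdis.countable_of_isOpen (fun _ _ => isOpen_ball)
    (fun b _ => ⟨y b, mem_ball_self (by positivity)⟩)
  have hS : S ⊆ ⋃ b ∈ u, closedBall b (5 * ((H + β) * t)) := by
    intro s hs
    obtain ⟨b, hb, hb2⟩ := hucov s hs
    exact mem_biUnion hb (hb2 (mem_closedBall_self (by positivity)))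
  calc ν S ≤ ν (⋃ b ∈ u, closedBall b (5 * ((H + β) * t))) := measure_mono hS
    _ ≤ ∑' b : u, ν (closedBall (b : X) (5 * ((H + β) * t))) := measure_biUnion_le ν hcount _
    _ ≤ ∑' b : u, ENNReal.ofReal (Cu * (5 * (H + β)) ^ n / (cl * β ^ n)) *
          ν (ball (y b) (β * t)) := by
        refine ENNReal.tsum_le_tsum fun b => ?_
        refine (hub _ _ (by positivity)).trans ?_
        refine le_trans ?_ (mul_le_mul_right (hy3 b (huS b.2)) _)
        rw [← ENNReal.ofReal_mul (by positivity)]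
        refine ENNReal.ofReal_le_ofReal (le_of_eq ?_)
        rw [mul_pow, mul_pow, mul_pow, mul_pow]
        field_simp
    _ = ENNReal.ofReal (Cu * (5 * (H + β)) ^ n / (cl * β ^ n)) *
          ν (⋃ b ∈ u, ball (y b) (β * t)) := by
        rw [ENNReal.tsum_mul_left, measure_biUnion hcount hdis (fun _ _ => measurableSet_ball)]
    _ ≤ _ := by
        gcongr
        exact iUnion₂_subset fun b hb => hy2 b (huS hb)

/-- Number of the sets `S j` containing the point. -/
def cnt {X : Type*} (S : ℕ → Set X) (x : X) : ENNReal := ∑' j, (S j).indicator 1 x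

lemma lintegral_cnt {X : Type*} [MeasurableSpace X] (ν : Measure X) (S : ℕ → Set X)
    (hS : ∀ j, MeasurableSet (S j)) : ∫⁻ x, cnt S x ∂ν = ∑' j, ν (S j) := by
  unfold cnt
  rw [lintegral_tsum fun j => (measurable_one.indicator (hS j)).aemeasurable]
  congr 1; ext j
  exact lintegral_indicator_one (hS j)

lemma measurable_cnt {X : Type*} [MeasurableSpace X] (S : ℕ → Set X)
    (hS : ∀ j, MeasurableSet (S j)) : Measurable (cnt S) :=
  Measurable.tsum fun j => measurable_one.indicator (hS j)

lemma mult_le {X : Type*} [MeasurableSpace X] (ν : Measure X) (W : ℕ → Set X) (B : Set X)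
    (hW : ∀ j, MeasurableSet (W j)) (hB : MeasurableSet B) (hWB : ∀ j, W j ⊆ B) (m : ℕ)
    (hm : ∀ x, cnt W x ≤ m) : ∑' j, ν (W j) ≤ m * ν B := by
  rw [← lintegral_cnt ν W hW]
  calc ∫⁻ x, cnt W x ∂ν ≤ ∫⁻ x, B.indicator (fun _ => (m : ENNReal)) x ∂ν := by
        refine lintegral_mono fun x => ?_
        by_cases hx : x ∈ B
        · simpa [hx] using hm x
        · have : ∀ j, x ∉ W j := fun j h => hx (hWB j h)
          simp [cnt, this]
    _ = m * ν B := by rw [lintegral_indicator_const hB]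

lemma cnt_mono {X : Type*} {S T : ℕ → Set X} (h : ∀ j, S j ⊆ T j) (x : X) :
    cnt S x ≤ cnt T x :=
  ENNReal.tsum_le_tsum fun j => indicator_le_indicator_of_subset (h j) (by simp) x

lemma cheb {X : Type*} [MeasurableSpace X] (ν : Measure X) (S : ℕ → Set X) (a : ENNReal) :
    a * ν {x | a ≤ cnt S x} ≤ ∑' j, ν (S j) := by
  have h1 := mul_meas_ge_le_lintegral (μ := ν) (measurable_cnt (fun j => toMeasurable ν (S j))
    (fun j => measurableSet_toMeasurable _ _)) a
  rw [lintegral_cnt ν _ (fun j => measurableSet_toMeasurable _ _)] at h1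
  simp only [measure_toMeasurable] at h1
  refine le_trans ?_ h1
  refine mul_le_mul_right (measure_mono fun x hx => ?_) _
  exact le_trans hx (cnt_mono (fun j => subset_toMeasurable ν (S j)) x)

lemma window {a b D : ℝ} (ha : 0 < a) (m : ℕ) (hb : b ≤ a * 2 ^ m) :
    ∑' j : ℕ, ({j : ℕ | a / 2 ^ j < D ∧ D < b / 2 ^ j} : Set ℕ).indicator (1 : ℕ → ENNReal) j
      ≤ m := by
  classical
  set P : Set ℕ := {j : ℕ | a / 2 ^ j < D ∧ D < b / 2 ^ j}
  by_cases hP : ∃ j, j ∈ P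
  · set j0 := Nat.find hP
    have h0 : j0 ∈ P := Nat.find_spec hP
    have hsub : ∀ j ∈ P, j ∈ Finset.Ico j0 (j0 + m) := by
      intro j hj
      rw [Finset.mem_Ico]
      refine ⟨Nat.find_min' hP hj, ?_⟩
      by_contra hcon
      push Not at hcon
      have h1 : a / 2 ^ j0 < b / 2 ^ j := h0.1.trans hj.2
      have h2 : b / 2 ^ j ≤ a * 2 ^ m / 2 ^ j := by gcongr
      have h3 : a * 2 ^ m / 2 ^ j ≤ a / 2 ^ j0 := by
        rw [div_le_div_iff₀ (by positivity) (by positivity), mul_assoc, ← pow_add]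
        gcongr
        · norm_num
        · omega
      linarith
    rw [tsum_eq_sum (s := Finset.Ico j0 (j0 + m))]
    · calc _ ≤ ∑ j ∈ Finset.Ico j0 (j0 + m), (1 : ENNReal) :=
            Finset.sum_le_sum fun j _ => indicator_le_self' (by simp) j
        _ = m := by simp
    · intro j hj
      exact indicator_of_notMem (fun h => hj (hsub j h)) _
  · push Not at hP
    simp [hP]

lemma window_cnt {X : Type*} (f : X → ℝ) {a b : ℝ} (ha : 0 < a) (m : ℕ) (hb : b ≤ a * 2 ^ m)
    (x : X) : cnt (fun j => {x | a / 2 ^ j < f x ∧ f x < b / 2 ^ j}) x ≤ m := by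
  refine le_trans (le_of_eq ?_) (window (D := f x) ha m hb)
  unfold cnt
  congr 1

/-- Density lemma: for most scales and points of `K`, `Y` is close to `K`. -/
lemma density_packing (n : ℕ) {Cu cl α H : ℝ} (hCu : 0 < Cu) (hcl : 0 < cl) (hα : 0 < α)
    (hα1 : α ≤ 1) (hH : 0 < H) : ∃ C : ℝ, 0 < C ∧
    ∀ {X : Type} [PseudoMetricSpace X] [MeasurableSpace X] [OpensMeasurableSpace X]
      [SecondCountableTopology X] (ν : Measure X) (Y K : Set X) (x₀ : X) (ℓ : ℝ), 0 < ℓ →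
      (∀ x : X, ∀ s : ℝ, 0 < s → ν (closedBall x s) ≤ ENNReal.ofReal (Cu * s ^ n)) →
      (∀ x ∈ Y, ∀ s : ℝ, 0 < s → s ≤ ℓ → ENNReal.ofReal (cl * s ^ n) ≤ ν (ball x s)) →
      K ⊆ ball x₀ ℓ →
      ∑' j : ℕ, ν {k ∈ K | ∃ y ∈ Y, dist y k ≤ H * (ℓ / 2 ^ j) ∧
        α * (ℓ / 2 ^ j) < infDist y K} ≤ ENNReal.ofReal (C * ℓ ^ n) := by
  obtain ⟨m, hm⟩ : ∃ m : ℕ, (2 * (H + 1)) / (α / 2) ≤ 2 ^ m :=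
    (pow_unbounded_of_one_lt _ (by norm_num : (1:ℝ) < 2)).imp fun _ h => h.le
  refine ⟨(Cu * (5 * (H + α / 2)) ^ n / (cl * (α / 2) ^ n)) * ((m + 1) * (Cu * (2 * H + 4) ^ n)),
    by positivity, ?_⟩
  intro X _ _ _ _ ν Y K x₀ ℓ hℓ hub hlb hK
  set W : ℕ → Set X := fun j => {x | (α / 2 * ℓ) / 2 ^ j < infDist x K ∧
    infDist x K < (2 * (H + 1) * ℓ) / 2 ^ j} with hW
  have hWm : ∀ j, MeasurableSet (W j) := fun j =>
    ((isOpen_lt continuous_const (continuous_infDist_pt K)).inter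
      (isOpen_lt (continuous_infDist_pt K) continuous_const)).measurableSet
  have hstep : ∀ j : ℕ, ν {k ∈ K | ∃ y ∈ Y, dist y k ≤ H * (ℓ / 2 ^ j) ∧
        α * (ℓ / 2 ^ j) < infDist y K} ≤
        ENNReal.ofReal (Cu * (5 * (H + α / 2)) ^ n / (cl * (α / 2) ^ n)) *
          ν (W j) := by
    intro j
    have ht : 0 < ℓ / 2 ^ j := by positivity
    have htl : ℓ / 2 ^ j ≤ ℓ := div_le_self hℓ.le (one_le_pow₀ (by norm_num))
    refine cov_le ν n hCu hcl hH.le (by positivity) ht _ _ hub ?_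
    rintro k ⟨hk, y, hyY, hyk, hyd⟩
    refine ⟨y, hyk, ?_, hlb y hyY _ (by positivity) (by nlinarith)⟩
    intro z hz
    rw [mem_ball] at hz
    have h1 : infDist y K ≤ infDist z K + dist y z := infDist_le_infDist_add_dist
    have h2 : infDist z K ≤ dist z k := infDist_le_dist_of_mem hk
    have h3 := dist_triangle z y k
    rw [dist_comm y z] at h1
    constructor
    · rw [mul_div_assoc]; nlinarith
    · rw [mul_div_assoc]; nlinarith
  by_cases hKe : K = ∅
  · simp [hKe]
  have hKne : K.Nonempty := nonempty_iff_ne_empty.2 hKe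
  have hWB : ∀ j, W j ⊆ closedBall x₀ ((2 * H + 4) * ℓ) := by
    intro j x hx
    have h2 : infDist x K < 2 * (H + 1) * ℓ := hx.2.trans_le
      (div_le_self (by positivity) (one_le_pow₀ (by norm_num)))
    obtain ⟨k, hk, hxk⟩ := (infDist_lt_iff hKne).1 h2
    have h3 := mem_ball.1 (hK hk)
    rw [mem_closedBall]
    have := dist_triangle x k x₀
    nlinarith
  have hmul := mult_le ν W _ hWm measurableSet_closedBall hWB (m) (fun x =>
    window_cnt (fun x => infDist x K) (a := α / 2 * ℓ) (b := 2 * (H + 1) * ℓ) (by positivity) m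
      (by rw [div_le_iff₀ (by positivity)] at hm; nlinarith) x)
  calc _ ≤ ∑' j, ENNReal.ofReal (Cu * (5 * (H + α / 2)) ^ n / (cl * (α / 2) ^ n)) *
          ν (W j) := ENNReal.tsum_le_tsum hstep
    _ = ENNReal.ofReal (Cu * (5 * (H + α / 2)) ^ n / (cl * (α / 2) ^ n)) * ∑' j, ν (W j) :=
        ENNReal.tsum_mul_left
    _ ≤ ENNReal.ofReal (Cu * (5 * (H + α / 2)) ^ n / (cl * (α / 2) ^ n)) *
        (ENNReal.ofReal (m + 1) * ENNReal.ofReal (Cu * ((2 * H + 4) * ℓ) ^ n)) := by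
        gcongr
        refine hmul.trans ?_
        gcongr
        · rw [ENNReal.ofReal_add (by positivity) (by norm_num)]
          simp
        · exact hub _ _ (by positivity)
    _ ≤ _ := by
        rw [← ENNReal.ofReal_mul (by positivity), ← ENNReal.ofReal_mul (by positivity)]
        refine ENNReal.ofReal_le_ofReal (le_of_eq ?_)
        rw [mul_pow (2 * H + 4) ℓ n]
        ring

lemma approx_add {n d : ℕ} {G : Euc n → Euc d} {β R : ℝ}
    (hG : ∀ x v, ‖x‖ ≤ R → ‖v‖ ≤ R → ‖G (x + v) + G (x - v) - (2 : ℝ) • G x‖ ≤ β)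
    (p q : Euc n) (hp : ‖p‖ ≤ R) (hq : ‖q‖ ≤ R) :
    ‖(G (p + q) - G 0) - (G p - G 0) - (G q - G 0)‖ ≤ 2 * β := by
  have hx : ‖(1/2 : ℝ) • (p + q)‖ ≤ R := by
    rw [norm_smul, Real.norm_of_nonneg (by norm_num)]
    have := norm_add_le p q
    linarith
  have hv : ‖(1/2 : ℝ) • (p - q)‖ ≤ R := by
    rw [norm_smul, Real.norm_of_nonneg (by norm_num)]
    have := norm_sub_le p q
    linarith
  have h1 := hG _ _ hx hx
  have h2 := hG _ _ hx hv
  have e1 : (1/2 : ℝ) • (p + q) + (1/2 : ℝ) • (p + q) = p + q := by module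
  have e2 : (1/2 : ℝ) • (p + q) - (1/2 : ℝ) • (p + q) = 0 := by module
  have e3 : (1/2 : ℝ) • (p + q) + (1/2 : ℝ) • (p - q) = p := by module
  have e4 : (1/2 : ℝ) • (p + q) - (1/2 : ℝ) • (p - q) = q := by module
  rw [e1, e2] at h1
  rw [e3, e4] at h2
  have e5 : (G (p + q) - G 0) - (G p - G 0) - (G q - G 0) =
    (G (p + q) + G 0 - (2 : ℝ) • G ((1/2 : ℝ) • (p + q))) -
    (G p + G q - (2 : ℝ) • G ((1/2 : ℝ) • (p + q))) := by module
  rw [e5]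
  exact (norm_sub_le _ _).trans (by linarith)

lemma approx_nat {n d : ℕ} {f : Euc n → Euc d} {β R : ℝ} (hf0 : f 0 = 0)
    (hf : ∀ p q, ‖p‖ ≤ R → ‖q‖ ≤ R → ‖f (p + q) - f p - f q‖ ≤ 2 * β)
    (p : Euc n) (a : ℕ) (hp : a * ‖p‖ ≤ R) (hp1 : ‖p‖ ≤ R) :
    ‖f ((a : ℝ) • p) - (a : ℝ) • f p‖ ≤ 2 * β * a := by
  induction a with
  | zero => simp [hf0]
  | succ a ih =>
    push_cast at hp ⊢
    have h0 : a * ‖p‖ ≤ R := by nlinarith [norm_nonneg p]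
    have h1 := ih h0
    have h2 := hf ((a : ℝ) • p) p (by rw [norm_smul, Real.norm_of_nonneg (by positivity)]; exact h0) hp1
    have e1 : f (((a : ℝ) + 1) • p) - ((a : ℝ) + 1) • f p =
      (f ((a : ℝ) • p + p) - f ((a : ℝ) • p) - f p) + (f ((a : ℝ) • p) - (a : ℝ) • f p) := by
      rw [add_smul, one_smul, add_smul, one_smul]; abel
    rw [e1]
    exact (norm_add_le _ _).trans (by linarith)

lemma approx_smul {n d m : ℕ} {M : NNReal} {f : Euc n → Euc d} {β R H : ℝ} (hβ0 : 0 < β)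
    (hm0 : (0 : ℝ) < m) (hf0 : f 0 = 0) (hfL : ∀ p q, ‖f p - f q‖ ≤ M * ‖p - q‖)
    (hadd : ∀ p q, ‖p‖ ≤ R → ‖q‖ ≤ R → ‖f (p + q) - f p - f q‖ ≤ 2 * β)
    (hR1 : H + 1 ≤ R) : ∀ e : Euc n, ‖e‖ = 1 → ∀ s : ℝ, |s| ≤ H →
      ‖f (s • e) - s • f e‖ ≤ 2 * M / m + 4 * β * (H * m) + 2 * β := by
  -- scalar multiples, nonneg
  have hpos : ∀ e : Euc n, ‖e‖ = 1 → ∀ s : ℝ, 0 ≤ s → s ≤ H →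
      ‖f (s • e) - s • f e‖ ≤ 2 * M / m + 4 * β * (H * m) := by
    intro e he s hs0 hsH
    set a := ⌊s * m⌋₊ with ha
    have ha1 : (a : ℝ) ≤ s * m := Nat.floor_le (by positivity)
    have ha2 : s * m < a + 1 := Nat.lt_floor_add_one _
    set p : Euc n := (m : ℝ)⁻¹ • e with hp
    have hpn : ‖p‖ = (m : ℝ)⁻¹ := by
      rw [hp, norm_smul, he, mul_one, Real.norm_of_nonneg (by positivity)]
    have hm1 : (1 : ℝ) ≤ m := by
      have : 0 < m := by exact_mod_cast hm0
      exact_mod_cast this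
    have hpR : ‖p‖ ≤ R := by
      rw [hpn]; have := inv_le_one_of_one_le₀ hm1; linarith
    have h1 := approx_nat hf0 hadd p m (by rw [hpn, mul_inv_cancel₀ hm0.ne']; linarith) hpR
    have h2 := approx_nat hf0 hadd p a (by
      rw [hpn, ← div_eq_mul_inv, div_le_iff₀ hm0]; nlinarith) hpR
    have e1 : (m : ℝ) • p = e := by rw [hp, smul_smul, mul_inv_cancel₀ hm0.ne', one_smul]
    rw [e1] at h1
    have h3 : ‖f (s • e) - f ((a : ℝ) • p)‖ ≤ M / m := by
      refine (hfL _ _).trans ?_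
      have : s • e - (a : ℝ) • p = (s - a / m) • e := by
        rw [hp, smul_smul, sub_smul, div_eq_mul_inv]
      rw [this, norm_smul, he, mul_one, Real.norm_eq_abs, div_eq_mul_inv (M : ℝ)]
      gcongr
      rw [abs_le]
      have : s - a / m = (s * m - a) * (m : ℝ)⁻¹ := by field_simp
      rw [this]
      have hi : 0 < (m : ℝ)⁻¹ := by positivity
      constructor <;> nlinarith
    have hfe : ‖f e‖ ≤ M := by
      have := hfL e 0
      rw [hf0, sub_zero, sub_zero, he, mul_one] at this
      exact this
    have key : ∀ X Y Z W : Euc d, X - s • Z = (X - Y) + (Y - (a : ℝ) • W) -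
        (a / m : ℝ) • (Z - (m : ℝ) • W) + (a / m - s : ℝ) • Z := by
      intro X Y Z W
      have hc : (a / m : ℝ) * m = a := div_mul_cancel₀ _ hm0.ne'
      rw [smul_sub, smul_smul, hc, sub_smul]; abel
    have e2 : f (s • e) - s • f e = (f (s • e) - f ((a : ℝ) • p)) +
        (f ((a : ℝ) • p) - (a : ℝ) • f p) - (a / m : ℝ) • (f e - (m : ℝ) • f p) +
        (a / m - s : ℝ) • f e := by
      exact key _ _ _ _
    rw [e2]
    have h4 : ‖(a / m : ℝ) • (f e - (m : ℝ) • f p)‖ ≤ 2 * β * a := by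
      rw [norm_smul, Real.norm_of_nonneg (by positivity)]
      calc (a / m : ℝ) * ‖f e - (m : ℝ) • f p‖ ≤ (a / m : ℝ) * (2 * β * m) := by gcongr
        _ = 2 * β * a := by field_simp
    have h5 : ‖(a / m - s : ℝ) • f e‖ ≤ M / m := by
      rw [norm_smul, Real.norm_eq_abs, div_eq_inv_mul (M : ℝ)]
      gcongr
      rw [abs_le]
      have : a / m - s = (a - s * m) * (m : ℝ)⁻¹ := by field_simp
      rw [this]
      have hi : 0 < (m : ℝ)⁻¹ := by positivity
      constructor <;> nlinarith
    have h6 : 2 * β * a ≤ 2 * β * (H * m) := by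
      gcongr
      exact ha1.trans (by gcongr)
    refine (norm_add_le _ _).trans ?_
    have h7 := norm_sub_le ((f (s • e) - f ((a : ℝ) • p)) +
        (f ((a : ℝ) • p) - (a : ℝ) • f p)) ((a / m : ℝ) • (f e - (m : ℝ) • f p))
    have h8 := norm_add_le (f (s • e) - f ((a : ℝ) • p)) (f ((a : ℝ) • p) - (a : ℝ) • f p)
    have h9 : 2 * (M : ℝ) / m = M / m + M / m := by ring
    linarith
  · intro e he s hs
    rcases le_total 0 s with h | h
    · rw [abs_of_nonneg h] at hs
      have := hpos e he s h hs
      linarith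
    · rw [abs_of_nonpos h] at hs
      have h1 := hpos e he (-s) (by linarith) hs
      have hn : ‖s • e‖ ≤ R := by
        rw [norm_smul, he, mul_one, Real.norm_eq_abs, abs_of_nonpos h]; linarith
      have h2 := hadd (s • e) ((-s) • e) hn (by rw [neg_smul, norm_neg]; exact hn)
      have e1 : s • e + (-s) • e = 0 := by module
      rw [e1, hf0] at h2
      have e2 : f (s • e) - s • f e =
        -(0 - f (s • e) - f ((-s) • e)) - (f ((-s) • e) - (-s) • f e) := by module
      rw [e2]
      refine (norm_sub_le _ _).trans ?_
      rw [norm_neg]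
      linarith

lemma approx_affine (n d : ℕ) (M : NNReal) {α H : ℝ} (hα : 0 < α) (hH : 0 < H) :
    ∃ β : ℝ, 0 < β ∧ ∃ R : ℝ, 0 < R ∧ ∀ G : Euc n → Euc d, LipschitzWith M G →
      (∀ x v, ‖x‖ ≤ R → ‖v‖ ≤ R → ‖G (x + v) + G (x - v) - (2 : ℝ) • G x‖ ≤ β) →
      ∃ A : Euc n →L[ℝ] Euc d, ∀ w, ‖w‖ ≤ H → ‖G w - G 0 - A w‖ ≤ α := by
  obtain ⟨m, hm⟩ := exists_nat_gt (4 * n * M / α)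
  have hm0 : (0 : ℝ) < m := lt_of_le_of_lt (by positivity) hm
  refine ⟨α / (8 * (n + 1) * (H * m + 1)), by positivity, (n + 2) * (H + 1), by positivity, ?_⟩
  intro G hGL hG
  set β := α / (8 * (n + 1) * (H * m + 1)) with hβ
  set R : ℝ := (n + 2) * (H + 1) with hR
  have hβ0 : 0 < β := by positivity
  set f : Euc n → Euc d := fun p => G p - G 0 with hf
  have hf0 : f 0 = 0 := by simp [hf]
  have hfL : ∀ p q, ‖f p - f q‖ ≤ M * ‖p - q‖ := by
    intro p q
    simp only [hf, sub_sub_sub_cancel_right]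
    exact hGL.norm_sub_le p q
  have hadd : ∀ p q, ‖p‖ ≤ R → ‖q‖ ≤ R → ‖f (p + q) - f p - f q‖ ≤ 2 * β :=
    fun p q hp hq => approx_add hG p q hp hq
  have hn0 : (0 : ℝ) ≤ n := Nat.cast_nonneg n
  have hR1 : H + 1 ≤ R := by rw [hR]; nlinarith
  have hall : ∀ e : Euc n, ‖e‖ = 1 → ∀ s : ℝ, |s| ≤ H →
      ‖f (s • e) - s • f e‖ ≤ 2 * M / m + 4 * β * (H * m) + 2 * β :=
    approx_smul hβ0 hm0 hf0 hfL hadd hR1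
  set e : Fin n → Euc n := fun i => EuclideanSpace.single i (1 : ℝ) with he
  have he1 : ∀ i, ‖e i‖ = 1 := fun i => by simp [he]
  refine ⟨∑ i, (EuclideanSpace.proj i : Euc n →L[ℝ] ℝ).smulRight (f (e i)), ?_⟩
  intro w hw
  have hwi : ∀ i, |w i| ≤ H := fun i => by
    have := PiLp.norm_apply_le w i
    rw [Real.norm_eq_abs] at this
    exact this.trans hw
  have hsum : ∀ S : Finset (Fin n),
      ‖f (∑ i ∈ S, w i • e i) - ∑ i ∈ S, f (w i • e i)‖ ≤ 2 * β * S.card := by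
    intro S
    induction S using Finset.induction_on with
    | empty => simp [hf0]
    | insert a S ha ih =>
      rw [Finset.sum_insert ha, Finset.sum_insert ha, Finset.card_insert_of_notMem ha]
      have hb : ‖∑ i ∈ S, w i • e i‖ ≤ R := by
        calc ‖∑ i ∈ S, w i • e i‖ ≤ ∑ i ∈ S, ‖w i • e i‖ := norm_sum_le _ _
          _ ≤ ∑ i ∈ S, H := Finset.sum_le_sum fun i _ => by
              rw [norm_smul, he1, mul_one, Real.norm_eq_abs]; exact hwi i
          _ = S.card * H := by simp
          _ ≤ n * H := by
              gcongr
              simpa using S.card_le_univ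
          _ ≤ R := by rw [hR]; nlinarith
      have ha' : ‖w a • e a‖ ≤ R := by
        rw [norm_smul, he1, mul_one, Real.norm_eq_abs]; linarith [hwi a]
      have h2 := hadd _ _ ha' hb
      have e1 : f (w a • e a + ∑ i ∈ S, w i • e i) - (f (w a • e a) + ∑ i ∈ S, f (w i • e i)) =
        (f (w a • e a + ∑ i ∈ S, w i • e i) - f (w a • e a) - f (∑ i ∈ S, w i • e i)) +
        (f (∑ i ∈ S, w i • e i) - ∑ i ∈ S, f (w i • e i)) := by abel
      rw [e1]
      refine (norm_add_le _ _).trans ?_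
      push_cast
      linarith
  have hwsum : ∑ i, w i • e i = w := by
    ext j
    simp [he, Pi.single_apply]
  have h1 := hsum Finset.univ
  rw [hwsum, Finset.card_univ, Fintype.card_fin] at h1
  have hA : (∑ i, (EuclideanSpace.proj i : Euc n →L[ℝ] ℝ).smulRight (f (e i))) w =
      ∑ i, w i • f (e i) := by
    simp
  have h2 : ‖∑ i, f (w i • e i) - ∑ i, w i • f (e i)‖ ≤
      n * (2 * M / m + 4 * β * (H * m) + 2 * β) := by
    rw [← Finset.sum_sub_distrib]
    calc _ ≤ ∑ i, ‖f (w i • e i) - w i • f (e i)‖ := norm_sum_le _ _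
      _ ≤ ∑ i : Fin n, (2 * M / m + 4 * β * (H * m) + 2 * β) :=
          Finset.sum_le_sum fun i _ => hall (e i) (he1 i) _ (hwi i)
      _ = _ := by simp; ring
  rw [hA]
  have e3 : G w - G 0 - ∑ i, w i • f (e i) =
    (f w - ∑ i, f (w i • e i)) + (∑ i, f (w i • e i) - ∑ i, w i • f (e i)) := by
    simp only [hf]; abel
  rw [e3]
  refine (norm_add_le _ _).trans ?_
  have h3 : n * (2 * M / m) ≤ α / 2 := by
    rw [div_lt_iff₀ hα] at hm
    rw [← mul_div_assoc, div_le_iff₀ hm0]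
    nlinarith
  have h4 : 4 * β * (n + 1) * (H * m + 1) = α / 2 := by
    rw [hβ]; field_simp; norm_num
  have h5 : 0 ≤ β * (H * m + 1) := by positivity
  nlinarith

lemma compact_supp_diff {n d : ℕ} {g : Euc n → Euc d} {ρ : ℝ} {c0 : Euc d}
    (hout : ∀ x, ρ ≤ ‖x‖ → g x = c0) (h h' : Euc n) :
    HasCompactSupport fun x => ‖g (x + h) - g (x + h')‖ ^ 2 := by
  refine HasCompactSupport.intro (isCompact_closedBall (0 : Euc n) (ρ + ‖h‖ + ‖h'‖)) ?_
  intro x hx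
  rw [mem_closedBall, dist_zero_right, not_le] at hx
  have h1 : ‖x‖ ≤ ‖x + h‖ + ‖h‖ := by
    have := norm_sub_le (x + h) h; rwa [add_sub_cancel_right] at this
  have h2 : ‖x‖ ≤ ‖x + h'‖ + ‖h'‖ := by
    have := norm_sub_le (x + h') h'; rwa [add_sub_cancel_right] at this
  have n1 := norm_nonneg h
  have n2 := norm_nonneg h'
  rw [hout (x + h) (by linarith), hout (x + h') (by linarith)]
  simp

lemma parallelogram_energy {n d : ℕ} (ν : Measure (Euc n)) [ν.IsAddHaarMeasure]
    {g : Euc n → Euc d} (hg : Continuous g) {ρ : ℝ} {c0 : Euc d}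
    (hout : ∀ x, ρ ≤ ‖x‖ → g x = c0) (h : Euc n) :
    Integrable (fun x => ‖g (x + h) + g (x - h) - (2 : ℝ) • g x‖ ^ 2) ν ∧
    ∫ x, ‖g (x + h) + g (x - h) - (2 : ℝ) • g x‖ ^ 2 ∂ν =
      4 * ∫ x, ‖g (x + h) - g x‖ ^ 2 ∂ν - ∫ x, ‖g (x + (2 : ℝ) • h) - g x‖ ^ 2 ∂ν := by
  have hintg : ∀ h h' : Euc n, Integrable (fun x => ‖g (x + h) - g (x + h')‖ ^ 2) ν := by
    intro h h'
    refine Continuous.integrable_of_hasCompactSupport ?_ (compact_supp_diff hout h h')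
    fun_prop
  have i1 : Integrable (fun x => ‖g (x + h) - g x‖ ^ 2) ν := by simpa using hintg h 0
  have i2 : Integrable (fun x => ‖g x - g (x - h)‖ ^ 2) ν := by
    simpa [sub_eq_add_neg] using hintg 0 (-h)
  have i3 : Integrable (fun x => ‖g (x + h) - g (x - h)‖ ^ 2) ν := by
    simpa [sub_eq_add_neg] using hintg h (-h)
  have e1 : ∀ x, ‖g (x + h) + g (x - h) - (2 : ℝ) • g x‖ ^ 2 =
      2 * ‖g (x + h) - g x‖ ^ 2 + 2 * ‖g x - g (x - h)‖ ^ 2 - ‖g (x + h) - g (x - h)‖ ^ 2 := by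
    intro x
    have := parallelogram_law_with_norm ℝ (g (x + h) - g x) (g x - g (x - h))
    have a1 : g (x + h) - g x + (g x - g (x - h)) = g (x + h) - g (x - h) := by abel
    have a2 : g (x + h) - g x - (g x - g (x - h)) = g (x + h) + g (x - h) - (2 : ℝ) • g x := by
      module
    rw [a1, a2] at this
    nlinarith
  have t1 : ∫ x, ‖g x - g (x - h)‖ ^ 2 ∂ν = ∫ x, ‖g (x + h) - g x‖ ^ 2 ∂ν := by
    rw [← integral_add_right_eq_self (fun x => ‖g x - g (x - h)‖ ^ 2) h]
    simp
  have t2 : ∫ x, ‖g (x + h) - g (x - h)‖ ^ 2 ∂ν =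
      ∫ x, ‖g (x + (2 : ℝ) • h) - g x‖ ^ 2 ∂ν := by
    rw [← integral_add_right_eq_self (fun x => ‖g (x + h) - g (x - h)‖ ^ 2) h]
    simp [two_smul, add_assoc]
  constructor
  · simp_rw [e1]
    exact ((i1.const_mul 2).add (i2.const_mul 2)).sub i3
  · simp_rw [e1]
    have i12 : Integrable (fun x => 2 * ‖g (x + h) - g x‖ ^ 2 + 2 * ‖g x - g (x - h)‖ ^ 2) ν :=
      (i1.const_mul 2).add (i2.const_mul 2)
    rw [integral_sub i12 i3,
      integral_add (i1.const_mul 2) (i2.const_mul 2), integral_const_mul, integral_const_mul,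
      t1, t2]
    ring

/-- Measure of the unit ball. -/
def ub {n : ℕ} (ν : Measure (Euc n)) : ℝ := (ν (ball 0 1)).toReal

lemma ub_pos {n : ℕ} (ν : Measure (Euc n)) [ν.IsAddHaarMeasure] : 0 < ub ν :=
  ENNReal.toReal_pos (measure_ball_pos ν _ one_pos).ne' measure_ball_lt_top.ne

lemma haar_ball {n : ℕ} (ν : Measure (Euc n)) [ν.IsAddHaarMeasure] (x : Euc n) {s : ℝ}
    (hs : 0 < s) : ν (ball x s) = ENNReal.ofReal (ub ν * s ^ n) := by
  rw [Measure.addHaar_ball_of_pos ν x hs, mul_comm, ENNReal.ofReal_mul (ub_pos ν).le, ub,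
    ENNReal.ofReal_toReal measure_ball_lt_top.ne]
  simp

lemma haar_closedBall {n : ℕ} (ν : Measure (Euc n)) [ν.IsAddHaarMeasure] (x : Euc n) {s : ℝ}
    (hs : 0 < s) : ν (closedBall x s) = ENNReal.ofReal (ub ν * s ^ n) := by
  rw [Measure.addHaar_closedBall ν x hs.le, mul_comm, ENNReal.ofReal_mul (ub_pos ν).le, ub,
    ENNReal.ofReal_toReal measure_ball_lt_top.ne]
  simp

lemma energy_le {n d : ℕ} (ν : Measure (Euc n)) [ν.IsAddHaarMeasure] {M : NNReal}
    {g : Euc n → Euc d} (hg : LipschitzWith M g) {ρ : ℝ} (hρ : 0 < ρ) {c0 : Euc d}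
    (hout : ∀ x, ρ ≤ ‖x‖ → g x = c0) (h : Euc n) :
    ∫ x, ‖g (x + h) - g x‖ ^ 2 ∂ν ≤ (M * ‖h‖) ^ 2 * (ub ν * (ρ + ‖h‖) ^ n) := by
  have hpos : 0 < ρ + ‖h‖ := by positivity
  have hz : ∀ x ∉ closedBall (0 : Euc n) (ρ + ‖h‖), ‖g (x + h) - g x‖ ^ 2 = 0 := by
    intro x hx
    rw [mem_closedBall, dist_zero_right, not_le] at hx
    have h1 : ‖x‖ ≤ ‖x + h‖ + ‖h‖ := by
      have := norm_sub_le (x + h) h; rwa [add_sub_cancel_right] at this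
    have n1 := norm_nonneg h
    rw [hout (x + h) (by linarith), hout x (by linarith)]
    simp
  rw [← setIntegral_eq_integral_of_forall_compl_eq_zero hz]
  have hfin : ν (closedBall (0 : Euc n) (ρ + ‖h‖)) < ⊤ := measure_closedBall_lt_top
  have := norm_setIntegral_le_of_norm_le_const (μ := ν) (f := fun x => ‖g (x + h) - g x‖ ^ 2)
    (C := (M * ‖h‖) ^ 2) hfin (fun x _ => by
      rw [Real.norm_of_nonneg (by positivity)]
      gcongr
      have := hg.norm_sub_le (x + h) x
      rwa [add_sub_cancel_left] at this)
  refine (Real.le_norm_self _).trans (this.trans (le_of_eq ?_))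
  rw [Measure.real, haar_closedBall ν _ hpos, ENNReal.toReal_ofReal
    (mul_nonneg (ub_pos ν).le (by positivity))]

/-- Packing for a fixed direction. -/
lemma second_diff_packing {n d : ℕ} (ν : Measure (Euc n)) [ν.IsAddHaarMeasure] {M : NNReal}
    {g : Euc n → Euc d} (hg : LipschitzWith M g) {ℓ : ℝ} (hℓ : 0 < ℓ) {c0 : Euc d}
    (hout : ∀ x, 2 * ℓ ≤ ‖x‖ → g x = c0) (v : Euc n) {γ : ℝ} (hγ : 0 < γ) :
    ∑' j : ℕ, ν {x | γ * (ℓ / 2 ^ j) ≤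
      ‖g (x + (ℓ / 2 ^ j) • v) + g (x - (ℓ / 2 ^ j) • v) - (2 : ℝ) • g x‖} ≤
      ENNReal.ofReal (γ⁻¹ ^ 2 * (4 * (M * ‖v‖) ^ 2 * (ub ν * (2 + 2 * ‖v‖) ^ n)) * ℓ ^ n) := by
  set I : Euc n → ℝ := fun h => ∫ x, ‖g (x + h) - g x‖ ^ 2 ∂ν with hI
  have hI0 : ∀ h, 0 ≤ I h := fun h => integral_nonneg fun x => by positivity
  set t : ℕ → ℝ := fun j => ℓ / 2 ^ j with htdef
  have htpos : ∀ j, 0 < t j := fun j => by simp only [htdef]; positivity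
  have htl : ∀ j, t j ≤ ℓ := fun j => div_le_self hℓ.le (one_le_pow₀ (by norm_num))
  set a : ℕ → ℝ := fun j => I ((2 * t j) • v) / (2 * t j) ^ 2 with ha
  have ha0 : ∀ j, 0 ≤ a j := fun j => div_nonneg (hI0 _) (by positivity)
  have haub : ∀ j, a j ≤ (M * ‖v‖) ^ 2 * (ub ν * (2 + 2 * ‖v‖) ^ n) * ℓ ^ n := by
    intro j
    have h1 := energy_le ν hg (by positivity : (0:ℝ) < 2 * ℓ) hout ((2 * t j) • v)
    simp only [ha]
    rw [div_le_iff₀ (by have := htpos j; positivity)]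
    refine h1.trans ?_
    rw [norm_smul, Real.norm_of_nonneg (by have := htpos j; positivity)]
    have hub := ub_pos ν
    have h2 : 2 * ℓ + 2 * t j * ‖v‖ ≤ (2 + 2 * ‖v‖) * ℓ := by
      have := mul_le_mul_of_nonneg_right (htl j) (norm_nonneg v)
      nlinarith
    have h2' : 0 ≤ 2 * ℓ + 2 * t j * ‖v‖ := by have := htpos j; positivity
    calc (M * (2 * t j * ‖v‖)) ^ 2 * (ub ν * (2 * ℓ + 2 * t j * ‖v‖) ^ n)
        ≤ (M * (2 * t j * ‖v‖)) ^ 2 * (ub ν * ((2 + 2 * ‖v‖) * ℓ) ^ n) := by gcongr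
      _ = _ := by rw [mul_pow _ ℓ]; ring
  have hterm : ∀ j, ∫ x, ‖g (x + t j • v) + g (x - t j • v) - (2 : ℝ) • g x‖ ^ 2 ∂ν =
      4 * (t j) ^ 2 * (a (j + 1) - a j) := by
    intro j
    rw [(parallelogram_energy ν hg.continuous hout (t j • v)).2]
    have e1 : 2 * t (j + 1) = t j := by simp only [htdef]; rw [pow_succ]; field_simp
    simp only [ha, e1, smul_smul, hI]
    have := (htpos j).ne'
    field_simp
    ring
  have hch : ∀ j, ν {x | γ * t j ≤
      ‖g (x + t j • v) + g (x - t j • v) - (2 : ℝ) • g x‖} ≤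
      ENNReal.ofReal (γ⁻¹ ^ 2 * 4 * (a (j + 1) - a j)) := by
    intro j
    have hi := (parallelogram_energy ν hg.continuous hout (t j • v)).1
    have h1 := mul_meas_ge_le_integral_of_nonneg (μ := ν)
      (f := fun x => ‖g (x + t j • v) + g (x - t j • v) - (2 : ℝ) • g x‖ ^ 2)
      (ae_of_all _ fun x => by positivity) hi ((γ * t j) ^ 2)
    rw [hterm] at h1
    have hp : 0 < γ * t j := mul_pos hγ (htpos j)
    have hset : {x | γ * t j ≤ ‖g (x + t j • v) + g (x - t j • v) - (2 : ℝ) • g x‖} =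
      {x | (γ * t j) ^ 2 ≤ ‖g (x + t j • v) + g (x - t j • v) - (2 : ℝ) • g x‖ ^ 2} := by
      ext x
      simp only [mem_setOf_eq]
      rw [pow_le_pow_iff_left₀ hp.le (norm_nonneg _) (by norm_num)]
    rw [hset]
    have hfin : ν {x | (γ * t j) ^ 2 ≤
        ‖g (x + t j • v) + g (x - t j • v) - (2 : ℝ) • g x‖ ^ 2} < ⊤ :=
      hi.measure_ge_lt_top (by positivity)
    rw [← ENNReal.ofReal_toReal hfin.ne]
    refine ENNReal.ofReal_le_ofReal ?_
    rw [Measure.real] at h1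
    have : γ⁻¹ ^ 2 * 4 * (a (j + 1) - a j) =
      (4 * (t j) ^ 2 * (a (j + 1) - a j)) / (γ * t j) ^ 2 := by
      have := (htpos j).ne'
      field_simp
    rw [this, le_div_iff₀ (by positivity)]
    linarith
  have hmono : ∀ j, 0 ≤ a (j + 1) - a j := by
    intro j
    have h1 : 0 ≤ ∫ x, ‖g (x + t j • v) + g (x - t j • v) - (2 : ℝ) • g x‖ ^ 2 ∂ν :=
      integral_nonneg fun x => by positivity
    rw [hterm] at h1
    have := htpos j
    exact (mul_nonneg_iff_of_pos_left (by positivity)).1 h1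
  refine ENNReal.tsum_le_of_sum_range_le fun J => ?_
  calc _ ≤ ∑ j ∈ Finset.range J, ENNReal.ofReal (γ⁻¹ ^ 2 * 4 * (a (j + 1) - a j)) :=
        Finset.sum_le_sum fun j _ => hch j
    _ = ENNReal.ofReal (∑ j ∈ Finset.range J, γ⁻¹ ^ 2 * 4 * (a (j + 1) - a j)) := by
        rw [ENNReal.ofReal_sum_of_nonneg]
        intro j _
        exact mul_nonneg (by positivity) (hmono j)
    _ ≤ _ := by
        refine ENNReal.ofReal_le_ofReal ?_
        rw [← Finset.mul_sum, Finset.sum_range_sub]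
        have h1 := haub J
        have h2 := ha0 0
        calc γ⁻¹ ^ 2 * 4 * (a J - a 0) ≤ γ⁻¹ ^ 2 * 4 *
            ((M * ‖v‖) ^ 2 * (ub ν * (2 + 2 * ‖v‖) ^ n) * ℓ ^ n) := by
              gcongr; linarith
          _ = _ := by ring

/-- Second difference is Lipschitz in the base point. -/
lemma second_diff_lip {n d : ℕ} {M : NNReal} {g : Euc n → Euc d} (hg : LipschitzWith M g)
    (x y w : Euc n) :
    ‖g (x + w) + g (x - w) - (2 : ℝ) • g x‖ ≤
      ‖g (y + w) + g (y - w) - (2 : ℝ) • g y‖ + 4 * M * dist x y := by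
  have h1 := hg.dist_le_mul (x + w) (y + w)
  have h2 := hg.dist_le_mul (x - w) (y - w)
  have h3 := hg.dist_le_mul x y
  rw [dist_add_right] at h1
  rw [dist_sub_right] at h2
  rw [dist_eq_norm] at h1 h2 h3
  have e : g (x + w) + g (x - w) - (2 : ℝ) • g x =
      (g (y + w) + g (y - w) - (2 : ℝ) • g y) + ((g (x + w) - g (y + w)) +
        (g (x - w) - g (y - w)) - (2 : ℝ) • (g x - g y)) := by module
  rw [e]
  refine (norm_add_le _ _).trans ?_
  have h4 := norm_sub_le ((g (x + w) - g (y + w)) + (g (x - w) - g (y - w))) ((2 : ℝ) • (g x - g y))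
  have h5 := norm_add_le (g (x + w) - g (y + w)) (g (x - w) - g (y - w))
  rw [norm_smul, Real.norm_of_nonneg (by norm_num : (0:ℝ) ≤ 2)] at h4
  linarith

/-- Second difference is Lipschitz in the increment. -/
lemma second_diff_lip' {n d : ℕ} {M : NNReal} {g : Euc n → Euc d} (hg : LipschitzWith M g)
    (x w w' : Euc n) :
    ‖g (x + w) + g (x - w) - (2 : ℝ) • g x‖ ≤
      ‖g (x + w') + g (x - w') - (2 : ℝ) • g x‖ + 2 * M * dist w w' := by
  have h1 := hg.dist_le_mul (x + w) (x + w')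
  have h2 := hg.dist_le_mul (x - w) (x - w')
  rw [dist_add_left] at h1
  rw [dist_sub_left] at h2
  rw [dist_eq_norm] at h1 h2
  have e : g (x + w) + g (x - w) - (2 : ℝ) • g x =
      (g (x + w') + g (x - w') - (2 : ℝ) • g x) + ((g (x + w) - g (x + w')) +
        (g (x - w) - g (x - w'))) := by module
  rw [e]
  refine (norm_add_le _ _).trans ?_
  have h5 := norm_add_le (g (x + w) - g (x + w')) (g (x - w) - g (x - w'))
  linarith

lemma quant_diff_v {n d : ℕ} (ν : Measure (Euc n)) [ν.IsAddHaarMeasure] (M : NNReal)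
    (v : Euc n) {β R : ℝ} (hβ : 0 < β) (hR : 0 < R) :
    ∃ C, 0 < C ∧ ∀ ℓ, 0 < ℓ → ∀ g : Euc n → Euc d, LipschitzWith M g → ∀ c0,
      (∀ x, 2 * ℓ ≤ ‖x‖ → g x = c0) →
      ∑' j : ℕ, ν {k | ∃ x, dist x k ≤ R * (ℓ / 2 ^ j) ∧ β * (ℓ / 2 ^ j) <
        ‖g (x + (ℓ / 2 ^ j) • v) + g (x - (ℓ / 2 ^ j) • v) - (2 : ℝ) • g x‖} ≤
        ENNReal.ofReal (C * ℓ ^ n) := by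
  have hub := ub_pos ν
  set b := β / (8 * (M + 1)) with hb
  have hb0 : 0 < b := by positivity
  set K := ub ν * (5 * (R + b)) ^ n / (ub ν * b ^ n) with hK
  have hK0 : 0 < K := by positivity
  set C := (β / 2)⁻¹ ^ 2 * (4 * (M * ‖v‖) ^ 2 * (ub ν * (2 + 2 * ‖v‖) ^ n)) with hC
  have hC0 : 0 ≤ C := by positivity
  refine ⟨K * C + 1, by positivity, fun ℓ hℓ g hg c0 hout => ?_⟩
  have hstep : ∀ j : ℕ, ν {k | ∃ x, dist x k ≤ R * (ℓ / 2 ^ j) ∧ β * (ℓ / 2 ^ j) <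
        ‖g (x + (ℓ / 2 ^ j) • v) + g (x - (ℓ / 2 ^ j) • v) - (2 : ℝ) • g x‖} ≤
      ENNReal.ofReal K * ν {x | β / 2 * (ℓ / 2 ^ j) ≤
      ‖g (x + (ℓ / 2 ^ j) • v) + g (x - (ℓ / 2 ^ j) • v) - (2 : ℝ) • g x‖} := by
    intro j
    have ht : 0 < ℓ / 2 ^ j := by positivity
    generalize ℓ / 2 ^ j = t at ht
    refine cov_le ν n hub hub hR.le hb0 ht _ _ (fun x s hs => (haar_closedBall ν x hs).le) ?_
    rintro s ⟨x, hx, hx2⟩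
    refine ⟨x, hx, fun z hz => ?_, (haar_ball ν x (by positivity)).ge⟩
    have h1 := second_diff_lip hg x z (t • v)
    rw [mem_ball'] at hz
    have h2 : 4 * M * dist x z ≤ β / 2 * t := by
      calc 4 * M * dist x z ≤ 4 * (M + 1) * (b * t) := by gcongr; simp
        _ = β / 2 * t := by rw [hb]; field_simp; norm_num
    show β / 2 * t ≤ ‖g (z + t • v) + g (z - t • v) - (2 : ℝ) • g z‖
    nlinarith
  refine (ENNReal.tsum_le_tsum hstep).trans ?_
  rw [ENNReal.tsum_mul_left]
  have h3 := second_diff_packing ν hg hℓ hout v (γ := β / 2) (by positivity)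
  refine (mul_le_mul_right h3 _).trans ?_
  rw [← ENNReal.ofReal_mul hK0.le]
  apply ENNReal.ofReal_le_ofReal
  rw [← hC, ← mul_assoc]
  gcongr
  linarith

/-- Quantitative differentiation. -/
lemma quant_diff {n d : ℕ} (ν : Measure (Euc n)) [ν.IsAddHaarMeasure] (M : NNReal)
    {α H : ℝ} (hα : 0 < α) (hH : 0 < H) :
    ∃ C, 0 < C ∧ ∀ ℓ, 0 < ℓ → ∀ g : Euc n → Euc d, LipschitzWith M g → ∀ c0,
      (∀ x, 2 * ℓ ≤ ‖x‖ → g x = c0) → ∃ T : ℕ → Set (Euc n),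
      (∀ j, MeasurableSet (T j)) ∧ ∑' j, ν (T j) ≤ ENNReal.ofReal (C * ℓ ^ n) ∧
      ∀ j, ∀ k ∉ T j, ∃ A : Euc n →L[ℝ] Euc d, ∀ u, dist u k ≤ H * (ℓ / 2 ^ j) →
        ‖g u - g k - A (u - k)‖ ≤ α * (ℓ / 2 ^ j) := by
  obtain ⟨β, hβ, R, hR, hap⟩ := approx_affine n d M hα hH
  obtain ⟨V, -, hVf, hVc⟩ := (isCompact_closedBall (0 : Euc n) R).finite_cover_balls
    (e := β / (4 * (M + 1))) (by positivity)
  have hq := fun v : Euc n => quant_diff_v (d := d) ν M v (half_pos hβ) hR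
  choose C hC0 hC using hq
  refine ⟨∑ v ∈ hVf.toFinset, C v + 1, ?_, fun ℓ hℓ g hg c0 hout => ?_⟩
  · have : 0 ≤ ∑ v ∈ hVf.toFinset, C v := Finset.sum_nonneg fun v _ => (hC0 v).le
    linarith
  set U : Euc n → ℕ → Set (Euc n) := fun v j =>
    {k | ∃ x, dist x k ≤ R * (ℓ / 2 ^ j) ∧ β / 2 * (ℓ / 2 ^ j) <
        ‖g (x + (ℓ / 2 ^ j) • v) + g (x - (ℓ / 2 ^ j) • v) - (2 : ℝ) • g x‖} with hU
  refine ⟨fun j => toMeasurable ν (⋃ v ∈ hVf.toFinset, U v j),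
    fun j => measurableSet_toMeasurable _ _, ?_, ?_⟩
  · simp only [measure_toMeasurable]
    have h1 : ∀ j, ν (⋃ v ∈ hVf.toFinset, U v j) ≤ ∑ v ∈ hVf.toFinset, ν (U v j) :=
      fun j => measure_biUnion_finset_le _ _
    refine (ENNReal.tsum_le_tsum h1).trans ?_
    rw [Summable.tsum_finsetSum (fun _ _ => ENNReal.summable)]
    refine (Finset.sum_le_sum fun v _ => hC v ℓ hℓ g hg c0 hout).trans ?_
    rw [← ENNReal.ofReal_sum_of_nonneg (fun v _ => mul_nonneg (hC0 v).le (by positivity)),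
      ← Finset.sum_mul]
    apply ENNReal.ofReal_le_ofReal
    gcongr
    linarith
  · intro j k hk
    have hk' : k ∉ ⋃ v ∈ hVf.toFinset, U v j := fun h => hk (subset_toMeasurable _ _ h)
    have ht : 0 < ℓ / 2 ^ j := by positivity
    simp only [hU] at hk'
    generalize ℓ / 2 ^ j = t at ht hk'
    have hk2 : ∀ v ∈ V, ∀ x, dist x k ≤ R * t →
        ‖g (x + t • v) + g (x - t • v) - (2 : ℝ) • g x‖ ≤ β / 2 * t := by
      intro v hv x hx
      by_contra hcon
      push Not at hcon
      exact hk' (mem_biUnion (hVf.mem_toFinset.2 hv) ⟨x, hx, hcon⟩)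
    set G : Euc n → Euc d := fun w => t⁻¹ • g (k + t • w) with hG
    have hGl : LipschitzWith M G := by
      apply LipschitzWith.of_dist_le_mul
      intro x y
      simp only [hG]
      rw [dist_smul₀, Real.norm_of_nonneg (by positivity)]
      have := hg.dist_le_mul (k + t • x) (k + t • y)
      rw [dist_add_left, dist_smul₀, Real.norm_of_nonneg ht.le] at this
      calc t⁻¹ * dist (g (k + t • x)) (g (k + t • y)) ≤ t⁻¹ * (M * (t * dist x y)) := by gcongr
        _ = _ := by field_simp
    obtain ⟨A, hA⟩ := hap G hGl (by
      intro x v hx hv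
      obtain ⟨v', hv', hvv⟩ := mem_iUnion₂.1 (hVc (mem_closedBall_zero_iff.2 hv))
      rw [mem_ball] at hvv
      have e : G (x + v) + G (x - v) - (2 : ℝ) • G x =
          t⁻¹ • (g ((k + t • x) + t • v) + g ((k + t • x) - t • v) - (2 : ℝ) • g (k + t • x)) := by
        simp only [hG]
        rw [show k + t • (x + v) = (k + t • x) + t • v by module,
          show k + t • (x - v) = (k + t • x) - t • v by module]
        module
      rw [e, norm_smul, Real.norm_of_nonneg (by positivity)]
      have h1 := second_diff_lip' hg (k + t • x) (t • v) (t • v')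
      have h2 := hk2 v' hv' (k + t • x) (by
        rw [dist_self_add_left, norm_smul, Real.norm_of_nonneg ht.le]; nlinarith)
      rw [dist_smul₀, Real.norm_of_nonneg ht.le] at h1
      have h3 : 2 * M * (t * dist v v') ≤ β / 2 * t := by
        calc 2 * M * (t * dist v v') ≤ 2 * (M + 1) * (t * (β / (4 * (M + 1)))) := by
              gcongr; simp
          _ = _ := by field_simp; norm_num
      rw [inv_mul_le_iff₀ ht]
      linarith)
    refine ⟨A, fun u hu => ?_⟩
    have := hA (t⁻¹ • (u - k)) (by
      rw [norm_smul, Real.norm_of_nonneg (by positivity), ← dist_eq_norm, inv_mul_le_iff₀ ht]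
      linarith)
    have e : G (t⁻¹ • (u - k)) - G 0 - A (t⁻¹ • (u - k)) = t⁻¹ • (g u - g k - A (u - k)) := by
      simp only [hG, map_smul, smul_smul, mul_inv_cancel₀ ht.ne', one_smul, smul_zero, add_zero,
        add_sub_cancel]
      module
    rw [e, norm_smul, Real.norm_of_nonneg (by positivity), inv_mul_le_iff₀ ht] at this
    linarith

lemma deg_cover {n d : ℕ} (A : Euc n →L[ℝ] Euc d) {M : ℝ} (hM : 0 ≤ M) (hA : ∀ w, ‖A w‖ ≤ M * ‖w‖)
    (m : ℕ) (hm : 0 < m) (e : Euc n) (he : e ≠ 0) (hAe : ‖A e‖ ≤ 1 / m * ‖e‖) :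
    ∃ Y : Finset (Euc d), Y.card ≤ (10 * m + 1) ^ (n - 1) ∧
      ∀ w, ‖w‖ ≤ 5 → ∃ y ∈ Y, ‖A w - y‖ ≤ (5 + n * M) / m := by
  classical
  have hn : 0 < n := by
    rcases Nat.eq_zero_or_pos n with h | h
    · subst h; exact absurd (Subsingleton.elim e 0) he
    · exact h
  set i0 : Fin n := ⟨0, hn⟩
  have hmR : (0:ℝ) < m := by exact_mod_cast hm
  have hen : 0 < ‖e‖ := norm_pos_iff.2 he
  obtain ⟨b, hb⟩ := Orthonormal.exists_orthonormalBasis_extension_of_card_eq (𝕜 := ℝ) (E := Euc n)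
    (ι := Fin n) (by simp) (v := fun _ => ‖e‖⁻¹ • e) (s := {i0}) (by
      rw [orthonormal_iff_ite]
      rintro ⟨i, hi⟩ ⟨j, hj⟩
      simp only [mem_singleton_iff] at hi hj
      subst hi; subst hj
      have h1 : ‖‖e‖⁻¹ • e‖ = 1 := by
        rw [norm_smul, norm_inv, norm_norm, inv_mul_cancel₀ hen.ne']
      simp [h1])
  have hb0 : b i0 = ‖e‖⁻¹ • e := hb i0 rfl
  have hAb0 : ‖A (b i0)‖ ≤ 1 / m := by
    rw [hb0, map_smul, norm_smul, norm_inv, norm_norm, inv_mul_le_iff₀ hen]; linarith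
  have hAb : ∀ i, ‖A (b i)‖ ≤ M := fun i => by
    have := hA (b i); rwa [b.norm_eq_one, mul_one] at this
  set J : Finset (Fin n → ℤ) := Fintype.piFinset
    (fun i => if i = i0 then {0} else Finset.Icc (-(5 * m : ℤ)) (5 * m)) with hJ
  set y : (Fin n → ℤ) → Euc d := fun j => ∑ i, ((j i : ℝ) / m) • A (b i) with hy
  refine ⟨J.image y, Finset.card_image_le.trans ?_, fun w hw => ?_⟩
  · rw [hJ, Fintype.card_piFinset, ← Finset.mul_prod_erase _ _ (Finset.mem_univ i0)]
    simp only [if_true, Finset.card_singleton, one_mul]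
    rw [Finset.prod_congr rfl (g := fun _ => 10 * m + 1)]
    · simp
    · intro i hi
      rw [if_neg (Finset.ne_of_mem_erase hi), Int.card_Icc]
      omega
  · have hc : ∀ i, |b.repr w i| ≤ 5 := fun i => by
      have h1 := EuclideanSpace.norm_eq (b.repr w)
      have h2 : ‖b.repr w i‖ ≤ ‖b.repr w‖ := PiLp.norm_apply_le _ _
      rw [b.repr.norm_map, Real.norm_eq_abs] at h2
      linarith
    set j : Fin n → ℤ := fun i => if i = i0 then 0 else ⌊(m:ℝ) * b.repr w i⌋ with hj
    refine ⟨y j, Finset.mem_image_of_mem _ ?_, ?_⟩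
    · rw [hJ, Fintype.mem_piFinset]
      intro i
      by_cases hi : i = i0
      · simp [hj, hi]
      · simp only [hj, hi, if_false, Finset.mem_Icc]
        have h1 := abs_le.1 (hc i)
        constructor
        · apply Int.le_floor.2; push_cast; nlinarith
        · have : (⌊(m:ℝ) * b.repr w i⌋ : ℝ) ≤ 5 * m := (Int.floor_le _).trans (by nlinarith)
          exact_mod_cast this
    · have hw' : A w = ∑ i, (b.repr w i) • A (b i) := by
        conv_lhs => rw [← b.sum_repr w]
        simp [map_sum, map_smul]
      rw [hw', hy]
      simp only
      rw [← Finset.sum_sub_distrib]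
      have hterm : ∀ i, ‖(b.repr w i) • A (b i) - ((j i : ℝ) / m) • A (b i)‖ ≤
          (if i = i0 then 5 / (m : ℝ) else 0) + M / m := by
        intro i
        rw [← sub_smul, norm_smul, Real.norm_eq_abs]
        by_cases hi : i = i0
        · simp only [hj, hi, if_true]
          have : |b.repr w i0 - ((0:ℤ):ℝ) / m| * ‖A (b i0)‖ ≤ 5 * (1 / m) := by
            gcongr; simpa using hc i0
          have h2 : 0 ≤ M / m := by positivity
          linarith [this, (by ring : (5:ℝ) * (1 / m) = 5 / m)]
        · simp only [hj, hi, if_false, zero_add]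
          have h1 := Int.floor_le ((m:ℝ) * b.repr w i)
          have h2 := Int.lt_floor_add_one ((m:ℝ) * b.repr w i)
          have : |b.repr w i - (⌊(m:ℝ) * b.repr w i⌋:ℝ) / m| ≤ 1 / m := by
            rw [abs_le]
            have e1 : b.repr w i - (⌊(m:ℝ) * b.repr w i⌋:ℝ) / m =
              ((m:ℝ) * b.repr w i - ⌊(m:ℝ) * b.repr w i⌋) / m := by field_simp
            rw [e1]
            constructor
            · have : 0 ≤ ((m:ℝ) * b.repr w i - ⌊(m:ℝ) * b.repr w i⌋) / m :=
                div_nonneg (by linarith) hmR.le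
              have : 0 ≤ 1 / (m:ℝ) := by positivity
              linarith
            · gcongr; linarith
          calc _ ≤ 1 / m * M := by gcongr; exact hAb i
            _ = _ := by ring
      refine (norm_sum_le _ _).trans ((Finset.sum_le_sum fun i _ => hterm i).trans (le_of_eq ?_))
      rw [Finset.sum_add_distrib]
      simp
      ring

/-- Images of balls on which a Lipschitz map is nearly degenerate are small. -/
lemma deg_small {n d : ℕ} (hn : 0 < n) (M : NNReal) {C₁ κ : ℝ} (hC₁ : 0 < C₁) (hκ : 0 < κ) :
    ∃ δ, 0 < δ ∧ ∀ (μ : Measure (Euc d)),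
      (∀ x s, 0 < s → μ (closedBall x s) ≤ ENNReal.ofReal (C₁ * s ^ n)) →
      ∀ g : Euc n → Euc d, LipschitzWith M g → ∀ k t, 0 < t → ∀ A : Euc n →L[ℝ] Euc d,
      (∀ u, dist u k ≤ 5 * t → ‖g u - g k - A (u - k)‖ ≤ δ * t) →
      (∃ e, e ≠ 0 ∧ ‖A e‖ ≤ δ * ‖e‖) →
      μ (g '' closedBall k (5 * t)) ≤ ENNReal.ofReal (κ * t ^ n) := by
  set K : ℝ := 6 + n * (M + 1) with hK
  have hK0 : 0 < K := by positivity
  obtain ⟨m, hm⟩ := exists_nat_gt (11 ^ (n - 1) * C₁ * K ^ n / κ)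
  have hm0R : (0:ℝ) < m := lt_of_le_of_lt (by positivity) hm
  have hm0 : 0 < m := by exact_mod_cast hm0R
  have hm1 : (1:ℝ) ≤ m := by exact_mod_cast hm0
  refine ⟨1 / m, by positivity, fun μ hμ g hg k t ht A hA ⟨e, he, hAe⟩ => ?_⟩
  have hAM : ∀ w, ‖A w‖ ≤ (M + 1) * ‖w‖ := by
    intro w
    rcases eq_or_ne w 0 with rfl | hw
    · simp
    have hwn : 0 < ‖w‖ := norm_pos_iff.2 hw
    set c := t * ‖w‖⁻¹ with hc
    have hc0 : 0 < c := by positivity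
    have hcw : ‖c • w‖ = t := by
      rw [norm_smul, Real.norm_of_nonneg hc0.le, hc]; field_simp
    have h1 := hA (k + c • w) (by rw [dist_self_add_left, hcw]; linarith)
    have h2 := hg.dist_le_mul (k + c • w) k
    rw [dist_self_add_left, hcw, dist_eq_norm] at h2
    rw [add_sub_cancel_left] at h1
    have h3 : ‖A (c • w)‖ ≤ (M + 1) * t := by
      have := norm_sub_norm_le (A (c • w)) (g (k + c • w) - g k)
      rw [norm_sub_rev (A (c • w))] at this
      have h4 : 1 / (m:ℝ) * t ≤ 1 * t := by
        gcongr; rw [div_le_one hm0R]; exact hm1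
      linarith
    rw [map_smul, norm_smul, Real.norm_of_nonneg hc0.le, hc] at h3
    have h5 : t * (‖w‖⁻¹ * ‖A w‖) ≤ t * (M + 1) := by linarith
    have h6 := le_of_mul_le_mul_left h5 ht
    rw [inv_mul_le_iff₀ hwn] at h6
    linarith
  obtain ⟨Y, hYc, hY⟩ := deg_cover A (by positivity) hAM m hm0 e he hAe
  have hcov : g '' closedBall k (5 * t) ⊆ ⋃ y ∈ Y, closedBall (g k + t • y) (K / m * t) := by
    rintro _ ⟨u, hu, rfl⟩
    rw [mem_closedBall] at hu
    obtain ⟨y, hy, hyw⟩ := hY (t⁻¹ • (u - k)) (by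
      rw [norm_smul, norm_inv, Real.norm_of_nonneg ht.le, ← dist_eq_norm, inv_mul_le_iff₀ ht]
      linarith)
    refine mem_biUnion hy ?_
    rw [mem_closedBall, dist_eq_norm]
    have e1 : g u - (g k + t • y) = (g u - g k - A (u - k)) + t • (A (t⁻¹ • (u - k)) - y) := by
      rw [map_smul, smul_sub, smul_smul, mul_inv_cancel₀ ht.ne', one_smul]; abel
    rw [e1]
    refine (norm_add_le _ _).trans ?_
    rw [norm_smul, Real.norm_of_nonneg ht.le]
    have h1 := hA u hu
    have h2 := mul_le_mul_of_nonneg_left hyw ht.le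
    refine (add_le_add h1 h2).trans (le_of_eq ?_)
    rw [hK]; field_simp; ring
  refine (measure_mono hcov).trans ((measure_biUnion_finset_le _ _).trans ?_)
  refine (Finset.sum_le_sum fun y _ => hμ _ _ (by positivity : 0 < K / m * t)).trans ?_
  rw [Finset.sum_const, nsmul_eq_mul, ← ENNReal.ofReal_natCast, ← ENNReal.ofReal_mul (by positivity)]
  apply ENNReal.ofReal_le_ofReal
  have hcard : (Y.card : ℝ) ≤ (11 * m) ^ (n - 1) := by
    calc (Y.card : ℝ) ≤ ((10 * m + 1 : ℕ) : ℝ) ^ (n - 1) := by exact_mod_cast hYc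
      _ ≤ _ := by push_cast; gcongr; linarith
  have hmm : (m:ℝ) ^ n = m ^ (n - 1) * m := by rw [← pow_succ, Nat.sub_add_cancel hn]
  calc (Y.card : ℝ) * (C₁ * (K / m * t) ^ n) ≤ (11 * m) ^ (n - 1) * (C₁ * (K / m * t) ^ n) := by
        gcongr
    _ = (11 ^ (n - 1) * C₁ * K ^ n) / m * t ^ n := by
        rw [mul_pow, mul_pow, div_pow, hmm]; field_simp
    _ ≤ κ * t ^ n := by
        gcongr
        rw [div_le_iff₀ hm0R]
        rw [div_lt_iff₀ hκ] at hm
        linarith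

/-- Weight factor for the greedy selection. -/
def gfac {X ι : Type} (B : ℕ → Set X) (lab : ℕ → X → ι) (Λ : ENNReal) (j : ℕ) (ρ : ι) (x : X) :
    ENNReal :=
  (B j)ᶜ.indicator 1 x + (B j ∩ {y | lab j y = ρ}).indicator (fun _ => Λ) x

lemma greedy {X ι : Type} [MeasurableSpace X] [Fintype ι] [Nonempty ι] (ν : Measure X)
    [IsFiniteMeasure ν] (B : ℕ → Set X) (hB : ∀ j, MeasurableSet (B j)) (lab : ℕ → X → ι)
    (hlab : ∀ j i, MeasurableSet {x | lab j x = i}) (N : ℕ) (hN : ∀ᵐ x ∂ν, cnt B x ≤ N) :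
    ∃ ρ : ℕ → ι, ν univ ≤ (Fintype.card ι : ENNReal) ^ N *
      ν {x | ∀ j, x ∈ B j → lab j x = ρ j} := by
  classical
  set Λ : ENNReal := ((Fintype.card ι : ℕ) : ENNReal) with hΛ
  have hΛ1 : 1 ≤ Λ := by rw [hΛ]; exact_mod_cast Fintype.card_pos
  have hΛ0 : Λ ≠ 0 := (zero_lt_one.trans_le hΛ1).ne'
  have hΛt : Λ ≠ ⊤ := ENNReal.natCast_ne_top _
  have hgm : ∀ j ρ, Measurable (gfac B lab Λ j ρ) := fun j ρ =>
    (measurable_one.indicator (hB j).compl).add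
      (measurable_const.indicator ((hB j).inter (hlab j ρ)))
  have hsum : ∀ j x, ∑ ρ, gfac B lab Λ j ρ x = Λ := by
    intro j x
    by_cases hx : x ∈ B j
    · simp [gfac, hx, indicator_apply]
    · simp [gfac, hx, hΛ]
  have hex : ∀ (j : ℕ) (f : X → ENNReal), ∃ ρ, Measurable f →
      ∫⁻ x, f x ∂ν ≤ ∫⁻ x, f x * gfac B lab Λ j ρ x ∂ν := by
    intro j f
    by_contra hcon
    push Not at hcon
    have hfm : Measurable f := (hcon (Classical.arbitrary ι)).1
    have h1 : ∑ ρ, ∫⁻ x, f x * gfac B lab Λ j ρ x ∂ν = Λ * ∫⁻ x, f x ∂ν := by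
      have hfg : ∀ ρ, Measurable (fun x => f x * gfac B lab Λ j ρ x) := fun ρ => hfm.mul (hgm j ρ)
      rw [← lintegral_finsetSum _ (fun ρ _ => hfg ρ),
        ← lintegral_const_mul _ hfm]
      refine lintegral_congr fun x => ?_
      rw [← Finset.mul_sum, hsum, mul_comm]
    have h2 : ∑ ρ : ι, ∫⁻ x, f x * gfac B lab Λ j ρ x ∂ν < ∑ _ρ : ι, ∫⁻ x, f x ∂ν :=
      ENNReal.sum_lt_sum_of_nonempty Finset.univ_nonempty fun ρ _ => (hcon ρ).2
    rw [h1] at h2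
    simp [hΛ] at h2
  choose r hr using hex
  set f : ℕ → X → ENNReal := fun j => Nat.rec (fun _ => 1)
    (fun i fi x => fi x * gfac B lab Λ i (r i fi) x) j with hf
  have f0 : f 0 = fun _ => 1 := rfl
  have fs : ∀ j, f (j + 1) = fun x => f j x * gfac B lab Λ j (r j (f j)) x := fun j => rfl
  clear_value f
  have fm : ∀ j, Measurable (f j) := by
    intro j
    induction j with
    | zero => rw [f0]; exact measurable_const
    | succ j ih => rw [fs]; exact ih.mul (hgm _ _)
  have fint : ∀ j, ν univ ≤ ∫⁻ x, f j x ∂ν := by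
    intro j
    induction j with
    | zero => rw [f0]; simp
    | succ j ih => rw [fs]; exact ih.trans (hr j (f j) (fm j))
  set ρ : ℕ → ι := fun j => r j (f j) with hρ
  set S : ℕ → Set X := fun j => {x | ∀ i < j, x ∈ B i → lab i x = ρ i} with hS
  have hSm : ∀ j, MeasurableSet (S j) := by
    intro j
    have : S j = ⋂ i, ⋂ (_ : i < j), ((B i)ᶜ ∪ {x | lab i x = ρ i}) := by
      ext x; simp [hS, imp_iff_not_or]
    rw [this]
    exact MeasurableSet.iInter fun i => MeasurableSet.iInter fun _ => (hB i).compl.union (hlab i _)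
  have fle : ∀ j x, f j x ≤ (S j).indicator
      (fun x => Λ ^ ((Finset.range j).filter (fun i => x ∈ B i)).card) x := by
    intro j
    induction j with
    | zero => intro x; rw [f0]; simp [hS]
    | succ j ih =>
      intro x
      rw [fs]
      by_cases hxS : x ∈ S j
      · have hi := ih x
        rw [indicator_of_mem hxS] at hi
        by_cases hx : x ∈ B j
        · by_cases hl : lab j x = ρ j
          · have hxS' : x ∈ S (j + 1) := by
              intro i hij hxi
              rcases Nat.lt_succ_iff_lt_or_eq.1 hij with h | h
              · exact hxS i h hxi
              · subst h; exact hl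
            rw [indicator_of_mem hxS', Finset.range_add_one, Finset.filter_insert, if_pos hx,
              Finset.card_insert_of_notMem (by simp), pow_succ]
            refine mul_le_mul' hi (le_of_eq ?_)
            have hl' : lab j x = r j (f j) := hl
            simp [gfac, hx, indicator_apply, hl']
          · have : gfac B lab Λ j (r j (f j)) x = 0 := by
              simp [gfac, hx, indicator_apply]
              intro h; exact absurd h hl
            simp [this]
        · have hxS' : x ∈ S (j + 1) := by
            intro i hij hxi
            rcases Nat.lt_succ_iff_lt_or_eq.1 hij with h | h
            · exact hxS i h hxi
            · subst h; exact absurd hxi hx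
          rw [indicator_of_mem hxS', Finset.range_add_one, Finset.filter_insert, if_neg hx]
          have : gfac B lab Λ j (r j (f j)) x = 1 := by simp [gfac, hx]
          simpa [this] using hi
      · have hi := ih x
        rw [indicator_of_notMem hxS] at hi
        simp [le_antisymm hi (zero_le)]
  have hbound : ∀ j, ν univ ≤ Λ ^ N * ν (S j) := by
    intro j
    refine (fint j).trans ?_
    rw [← lintegral_indicator_const (hSm j)]
    refine lintegral_mono_ae ?_
    filter_upwards [hN] with x hx
    refine (fle j x).trans ?_
    refine indicator_le_indicator ?_
    refine pow_le_pow_right₀ hΛ1 ?_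
    have h1 : (((Finset.range j).filter (fun i => x ∈ B i)).card : ENNReal) ≤ cnt B x := by
      rw [cnt]
      refine le_trans (le_of_eq ?_) (ENNReal.sum_le_tsum (Finset.range j))
      rw [Finset.card_filter]
      push_cast
      exact Finset.sum_congr rfl fun i _ => by simp [indicator_apply]
    exact_mod_cast h1.trans hx
  refine ⟨ρ, ?_⟩
  have hanti : Antitone S := fun i j hij x hx k hk => hx k (hk.trans_le hij)
  have hT := tendsto_measure_iInter_atTop (μ := ν) (fun j => (hSm j).nullMeasurableSet) hanti
    ⟨0, measure_ne_top _ _⟩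
  have hI : ⋂ j, S j = {x | ∀ j, x ∈ B j → lab j x = ρ j} := by
    ext x
    simp only [mem_iInter]
    exact ⟨fun h j => h (j + 1) j (Nat.lt_succ_self j), fun h j i _ => h i⟩
  rw [hI] at hT
  refine ge_of_tendsto' (ENNReal.Tendsto.const_mul hT (Or.inr ?_)) hbound
  exact ENNReal.pow_ne_top hΛt

lemma haus_haar (n : ℕ) : (μH[n] : Measure (Euc n)).IsAddHaarMeasure := by
  have := MeasureTheory.isAddHaarMeasure_hausdorffMeasure (E := Euc n)
  simpa using this

/-- Finite labels separating points at a given scale. -/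
lemma labels (n : ℕ) {t : ℝ} (ht : 0 < t) : ∃ lab : Euc n → (Fin n → ZMod (2 * n + 3 + 1)),
    (∀ i, MeasurableSet {x | lab x = i}) ∧
    ∀ k k', lab k = lab k' → dist k k' ≤ t → dist k k' ≤ t / 2 := by
  set m : ℝ := 2 * n + 2 with hm
  have hm0 : 0 < m := by positivity
  set fl : Euc n → (Fin n → ℤ) := fun x i => ⌊m * x i / t⌋ with hfl
  have hflm : Measurable fl := by
    refine measurable_pi_lambda _ fun i => Int.measurable_floor.comp ?_
    have : Measurable (fun x : Euc n => x i) := (EuclideanSpace.proj (𝕜 := ℝ) i).continuous.measurable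
    exact (this.const_mul m).div_const t
  refine ⟨fun x i => ((fl x i : ℤ) : ZMod (2 * n + 3 + 1)), fun i => ?_, fun k k' hk hd => ?_⟩
  · have : {x | (fun i => ((fl x i : ℤ) : ZMod (2 * n + 3 + 1))) = i} =
        fl ⁻¹' {z | (fun i => ((z i : ℤ) : ZMod (2 * n + 3 + 1))) = i} := rfl
    rw [this]
    exact hflm (Set.to_countable _).measurableSet
  · have hcoord : ∀ i, |k i - k' i| ≤ dist k k' := by
      intro i
      have : ‖(k - k') i‖ ≤ ‖k - k'‖ := PiLp.norm_apply_le _ _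
      rw [dist_eq_norm]; simpa using this
    have hsmall : ∀ i, |k i - k' i| ≤ t / m := by
      intro i
      have h1 : ((fl k i : ℤ) : ZMod (2 * n + 3 + 1)) = (fl k' i : ℤ) := congrFun hk i
      rw [ZMod.intCast_eq_intCast_iff_dvd_sub] at h1
      have hc := (hcoord i).trans hd
      have a1 := Int.floor_le (m * k i / t)
      have a2 := Int.lt_floor_add_one (m * k i / t)
      have b1 := Int.floor_le (m * k' i / t)
      have b2 := Int.lt_floor_add_one (m * k' i / t)
      have hdiff : |m * k i / t - m * k' i / t| = m * |k i - k' i| / t := by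
        rw [← sub_div, ← mul_sub, abs_div, abs_mul, abs_of_pos ht, abs_of_pos hm0]
      have hle : |m * k i / t - m * k' i / t| ≤ m := by
        rw [hdiff, div_le_iff₀ ht]; gcongr
      have hfe : fl k' i - fl k i = 0 := by
        refine Int.eq_zero_of_abs_lt_dvd h1 ?_
        have : ((|fl k' i - fl k i| : ℤ) : ℝ) < ((2 * n + 3 + 1 : ℕ) : ℤ) := by
          push_cast
          simp only [hfl]
          rw [abs_lt]
          have := abs_le.1 hle
          constructor <;> linarith
        exact_mod_cast this
      have hfe' : fl k' i = fl k i := by linarith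
      simp only [hfl] at hfe'
      rw [hfe'] at b1 b2
      have h3 : |m * k i / t - m * k' i / t| ≤ 1 := by
        rw [abs_le]; constructor <;> linarith
      rw [hdiff, div_le_iff₀ ht, one_mul] at h3
      rw [le_div_iff₀ hm0]; linarith
    have h1 : dist k k' ≤ ∑ _i : Fin n, t / m := by
      rw [EuclideanSpace.dist_eq]
      refine Real.sqrt_le_iff.2 ⟨Finset.sum_nonneg fun _ _ => by positivity, ?_⟩
      calc ∑ i, dist (k i) (k' i) ^ 2 ≤ ∑ _i : Fin n, (t / m) ^ 2 := by
            gcongr with i; rw [Real.dist_eq]; exact hsmall i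
        _ ≤ (∑ _i : Fin n, t / m) ^ 2 :=
by
            have hnn : (n:ℝ) ≤ n ^ 2 := by exact_mod_cast Nat.le_self_pow two_ne_zero n
            simp only [Finset.sum_const, Finset.card_univ, Fintype.card_fin, nsmul_eq_mul]
            rw [mul_pow]
            gcongr
    refine h1.trans ?_
    rw [Finset.sum_const, Finset.card_univ, Fintype.card_fin, nsmul_eq_mul, hm, ← mul_div_assoc,
      div_le_div_iff₀ (by positivity) (by norm_num)]
    nlinarith

/-- Vitali type bound for the degenerate set. -/
lemma deg_total {n d : ℕ} (ν : Measure (Euc n)) [ν.IsAddHaarMeasure] (μ : Measure (Euc d))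
    {κ ℓ : ℝ} (hκ : 0 < κ) (hℓ : 0 < ℓ) (g : Euc n → Euc d) (E : Set (Euc n))
    (hE : E ⊆ ball 0 ℓ)
    (h : ∀ k ∈ E, ∃ t, 0 < t ∧ t ≤ ℓ ∧
      μ (g '' closedBall k (5 * t)) ≤ ENNReal.ofReal (κ * t ^ n)) :
    μ (g '' E) ≤ ENNReal.ofReal (κ * 2 ^ n * ℓ ^ n) := by
  have h' : ∀ k, ∃ t, k ∈ E → 0 < t ∧ t ≤ ℓ ∧
      μ (g '' closedBall k (5 * t)) ≤ ENNReal.ofReal (κ * t ^ n) := by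
    intro k
    by_cases hk : k ∈ E
    · obtain ⟨t, ht⟩ := h k hk; exact ⟨t, fun _ => ht⟩
    · exact ⟨0, fun h => absurd h hk⟩
  choose t ht using h'
  obtain ⟨u, huE, hdisj, hcov⟩ := Vitali.exists_disjoint_subfamily_covering_enlargement_closedBall
    E (fun k => k) t ℓ (fun a ha => (ht a ha).2.1) 5 (by norm_num)
  have hucount : u.Countable := hdisj.countable_of_nonempty_interior fun a ha => by
    refine (nonempty_ball.2 (ht a (huE ha)).1).mono ball_subset_interior_closedBall
  have hsub : g '' E ⊆ ⋃ b ∈ u, g '' closedBall b (5 * t b) := by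
    rintro _ ⟨k, hk, rfl⟩
    obtain ⟨b, hb, hb2⟩ := hcov k hk
    exact mem_biUnion hb ⟨k, hb2 (mem_closedBall_self (ht k hk).1.le), rfl⟩
  have hub := ub_pos ν
  refine (measure_mono hsub).trans ((measure_biUnion_le μ hucount _).trans ?_)
  have hterm : ∀ b : u, μ (g '' closedBall (b : Euc n) (5 * t b)) ≤
      ENNReal.ofReal (κ / ub ν) * ν (closedBall (b : Euc n) (t b)) := by
    intro b
    have hb := ht b (huE b.2)
    refine hb.2.2.trans (le_of_eq ?_)
    rw [haar_closedBall ν _ hb.1, ← ENNReal.ofReal_mul (by positivity)]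
    congr 1; field_simp
  refine (ENNReal.tsum_le_tsum hterm).trans ?_
  rw [ENNReal.tsum_mul_left]
  have hunion : ∑' b : u, ν (closedBall (b : Euc n) (t b)) ≤ ν (closedBall 0 (2 * ℓ)) := by
    rw [← measure_biUnion hucount hdisj (fun b _ => measurableSet_closedBall)]
    refine measure_mono (iUnion₂_subset fun b hb => ?_)
    refine closedBall_subset_closedBall' ?_
    have h1 := (ht b (huE hb)).2.1
    have h2 := hE (huE hb)
    rw [mem_ball] at h2
    linarith
  refine (mul_le_mul_right hunion _).trans (le_of_eq ?_)
  rw [haar_closedBall ν _ (by positivity), ← ENNReal.ofReal_mul (by positivity)]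
  congr 1
  rw [mul_pow]; field_simp

lemma exists_scale {ℓ d : ℝ} (hd : 0 < d) (hdl : d ≤ ℓ) :
    ∃ j : ℕ, ℓ / 2 ^ j / 2 < d ∧ d ≤ ℓ / 2 ^ j := by
  classical
  have hex : ∃ j : ℕ, ℓ / 2 ^ j / 2 < d := by
    obtain ⟨j, hj⟩ := pow_unbounded_of_one_lt (ℓ / d) (by norm_num : (1:ℝ) < 2)
    refine ⟨j, ?_⟩
    rw [div_lt_iff₀ hd] at hj
    have : ℓ / 2 ^ j < d := by rw [div_lt_iff₀ (by positivity)]; linarith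
    have h0 : 0 < ℓ / 2 ^ j := div_pos (hd.trans_le hdl) (by positivity)
    linarith
  refine ⟨Nat.find hex, Nat.find_spec hex, ?_⟩
  rcases Nat.eq_zero_or_pos (Nat.find hex) with h | h
  · rw [h]; simpa using hdl
  · have := Nat.find_min hex (Nat.sub_lt h one_pos)
    push Not at this
    refine this.trans (le_of_eq ?_)
    clear this
    generalize Nat.find hex = j at h
    obtain ⟨i, rfl⟩ := Nat.exists_eq_succ_of_ne_zero h.ne'
    simp only [Nat.succ_eq_add_one, Nat.add_sub_cancel]
    rw [pow_succ]; field_simp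

lemma lip_image_le {n d : ℕ} {M : NNReal} {g : Euc n → Euc d} (hg : LipschitzWith M g)
    (S : Set (Euc n)) : μH[n] (g '' S) ≤ ENNReal.ofReal ((M + 1 : ℝ) ^ n) * μH[n] S := by
  refine (hg.lipschitzOnWith.hausdorffMeasure_image_le (s := S) (Nat.cast_nonneg n)).trans ?_
  gcongr
  rw [ENNReal.rpow_natCast, ENNReal.ofReal_pow (by positivity)]
  gcongr
  rw [← ENNReal.ofReal_coe_nnreal]
  apply ENNReal.ofReal_le_ofReal
  linarith

/-- Existence of a large piece on which the map is bilipschitz. -/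
lemma bilip_piece (n : ℕ) (hn : 0 < n) {d : ℕ} (M : NNReal) {C₁ θ : ℝ} (hC₁ : 0 < C₁)
    (hθ : 0 < θ) :
    ∃ δ, 0 < δ ∧ ∃ η, 0 < η ∧ ∀ ℓ, 0 < ℓ → ∀ μ : Measure (Euc d),
      (∀ A, μ A ≤ μH[n] A) →
      (∀ x s, 0 < s → μ (closedBall x s) ≤ ENNReal.ofReal (C₁ * s ^ n)) →
      ∀ g : Euc n → Euc d, LipschitzWith M g → ∀ c0, (∀ x, 2 * ℓ ≤ ‖x‖ → g x = c0) →
      ∀ S ⊆ ball 0 (ℓ / 2), ENNReal.ofReal (θ * ℓ ^ n) ≤ μ (g '' S) →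
      ∃ K ⊆ S, ENNReal.ofReal (η * ℓ ^ n) ≤ μH[n] K ∧
        ∀ k ∈ K, ∀ k' ∈ K, δ * dist k k' ≤ dist (g k) (g k') := by
  haveI := haus_haar n
  set ν : Measure (Euc n) := μH[n] with hν
  obtain ⟨δ, hδ, hdeg⟩ := deg_small (d := d) hn M hC₁ (κ := θ / (4 * 2 ^ n)) (by positivity)
  obtain ⟨C, hC0, hqd⟩ := quant_diff (d := d) ν M (α := δ / 4) (H := 5) (by positivity)
    (by norm_num)
  obtain ⟨N, hN⟩ := exists_nat_gt (4 * C * (M + 1) ^ n / θ)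
  have hN0 : (0:ℝ) < N := lt_of_le_of_lt (by positivity) hN
  set Λ : ℕ := Fintype.card (Fin n → ZMod (2 * n + 3 + 1)) with hΛ
  have hΛ0 : 0 < (Λ : ℝ) := by exact_mod_cast Fintype.card_pos
  refine ⟨δ / 2, by positivity, θ / (2 * (M + 1) ^ n * Λ ^ N), by positivity,
    fun ℓ hℓ μ hμν hμ g hg c0 hout S hS hθS => ?_⟩
  obtain ⟨T, hTm, hTs, hT⟩ := hqd ℓ hℓ g hg c0 hout
  set Deg : Set (Euc n) := {k | k ∈ ball (0 : Euc n) ℓ ∧ ∃ j : ℕ, ∃ A : Euc n →L[ℝ] Euc d,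
    (∀ u, dist u k ≤ 5 * (ℓ / 2 ^ j) → ‖g u - g k - A (u - k)‖ ≤ δ * (ℓ / 2 ^ j)) ∧
      ∃ e, e ≠ 0 ∧ ‖A e‖ ≤ δ * ‖e‖} with hDeg
  set Many : Set (Euc n) := {x | (N : ENNReal) ≤ cnt T x} with hMany
  have hDegm : μ (g '' Deg) ≤ ENNReal.ofReal (θ / 4 * ℓ ^ n) := by
    have := deg_total ν μ (κ := θ / (4 * 2 ^ n)) (by positivity) hℓ g Deg (fun k hk => hk.1) (by
      rintro k ⟨-, j, A, hA, he⟩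
      have ht : 0 < ℓ / 2 ^ j := by positivity
      exact ⟨ℓ / 2 ^ j, ht, div_le_self hℓ.le (one_le_pow₀ (by norm_num)),
        hdeg μ hμ g hg k _ ht A hA he⟩)
    refine this.trans (le_of_eq ?_)
    congr 1; field_simp
  have hManym : μ (g '' Many) ≤ ENNReal.ofReal (θ / 4 * ℓ ^ n) := by
    have h1 := (cheb ν T N).trans hTs
    have h2 : ν Many ≤ ENNReal.ofReal (C * ℓ ^ n / N) := by
      rw [ENNReal.ofReal_div_of_pos hN0, ENNReal.ofReal_natCast]
      rw [ENNReal.le_div_iff_mul_le (Or.inl (by exact_mod_cast hN0.ne')) (Or.inl (by simp))]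
      rwa [mul_comm]
    refine (hμν _).trans ((lip_image_le hg _).trans ((mul_le_mul_right h2 _).trans ?_))
    rw [← ENNReal.ofReal_mul (by positivity)]
    apply ENNReal.ofReal_le_ofReal
    rw [div_lt_iff₀ hθ] at hN
    rw [← mul_div_assoc, div_le_iff₀ hN0]
    have : 0 ≤ ℓ ^ n := by positivity
    nlinarith
  set K₀ := S \ (Deg ∪ Many) with hK₀
  have hK₀m : ENNReal.ofReal (θ / 2 * ℓ ^ n) ≤ μ (g '' K₀) := by
    have hsub : g '' S ⊆ g '' K₀ ∪ (g '' Deg ∪ g '' Many) := by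
      rw [← image_union, ← image_union]
      apply image_mono
      intro x hx
      by_cases h : x ∈ Deg ∪ Many
      · exact Or.inr h
      · exact Or.inl ⟨hx, h⟩
    have h1 := hθS.trans ((measure_mono hsub).trans ((measure_union_le _ _).trans
      (add_le_add_right ((measure_union_le _ _).trans (add_le_add hDegm hManym)) _)))
    rw [← ENNReal.ofReal_add (by positivity) (by positivity)] at h1
    have e1 : θ * ℓ ^ n = θ / 2 * ℓ ^ n + (θ / 4 * ℓ ^ n + θ / 4 * ℓ ^ n) := by ring
    rw [e1, ENNReal.ofReal_add (by positivity) (by positivity)] at h1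
    exact (ENNReal.add_le_add_iff_right ENNReal.ofReal_ne_top).1 h1
  have hK₀ν : ENNReal.ofReal (θ / 2 * ℓ ^ n) ≤ ENNReal.ofReal ((M + 1 : ℝ) ^ n) * ν K₀ :=
    hK₀m.trans ((hμν _).trans (lip_image_le hg _))
  have hlab := fun j : ℕ => labels n (t := ℓ / 2 ^ j) (by positivity)
  choose lab hlabm hlabs using hlab
  haveI : IsFiniteMeasure (ν.restrict K₀) := by
    refine ⟨?_⟩
    rw [Measure.restrict_apply_univ]
    exact (measure_mono ((sdiff_subset).trans hS)).trans_lt measure_ball_lt_top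
  obtain ⟨ρ, hρ⟩ := greedy (ν.restrict K₀) T hTm lab hlabm N (by
    rw [ae_iff]
    rw [Measure.restrict_apply]
    · refine measure_mono_null ?_ measure_empty
      rintro x ⟨hx, hx2⟩
      refine hx2.2 (Or.inr ?_)
      rw [Set.mem_setOf_eq, not_le] at hx
      exact hx.le
    · simp only [not_le]
      exact measurableSet_lt measurable_const (measurable_cnt T hTm))
  have hmeas : MeasurableSet {x | ∀ j, x ∈ T j → lab j x = ρ j} := by
    have : {x | ∀ j, x ∈ T j → lab j x = ρ j} = ⋂ i, ((T i)ᶜ ∪ {x | lab i x = ρ i}) := by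
      ext x; simp [imp_iff_not_or]
    rw [this]
    exact MeasurableSet.iInter fun i => (hTm i).compl.union (hlabm i _)
  rw [Measure.restrict_apply_univ, Measure.restrict_apply hmeas] at hρ
  refine ⟨{x | ∀ j, x ∈ T j → lab j x = ρ j} ∩ K₀, fun x hx => hx.2.1, ?_, ?_⟩
  · have h1 := hK₀ν.trans (mul_le_mul_right hρ _)
    have e2 : ((Fintype.card (Fin n → ZMod (2 * n + 3 + 1)) : ℕ) : ENNReal) ^ N =
        ENNReal.ofReal ((Λ : ℝ) ^ N) := by
      rw [ENNReal.ofReal_pow (by positivity), ENNReal.ofReal_natCast]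
    rw [e2, ← mul_assoc, ← ENNReal.ofReal_mul (by positivity)] at h1
    have e3 : θ / 2 * ℓ ^ n = ((M + 1 : ℝ) ^ n * Λ ^ N) *
        (θ / (2 * (M + 1) ^ n * Λ ^ N) * ℓ ^ n) := by field_simp
    rw [e3, ENNReal.ofReal_mul (by positivity)] at h1
    exact (ENNReal.mul_le_mul_iff_right (by
      rw [Ne, ENNReal.ofReal_eq_zero, not_le]; positivity) ENNReal.ofReal_ne_top).1 h1
  · have key : ∀ j : ℕ, ∀ k ∈ K₀, k ∉ T j → ∀ k', ℓ / 2 ^ j / 2 < dist k' k → dist k' k ≤ ℓ / 2 ^ j →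
        δ / 2 * dist k' k ≤ dist (g k') (g k) := by
      intro j k hk hkT k' h1 h2
      obtain ⟨A, hA⟩ := hT j k hkT
      have ht : 0 < ℓ / 2 ^ j := by positivity
      have hnd : ∀ e, e ≠ 0 → δ * ‖e‖ < ‖A e‖ := by
        intro e he
        by_contra hcon
        push Not at hcon
        refine hk.2 (Or.inl ⟨?_, j, A, fun u hu => (hA u hu).trans (by nlinarith), e, he, hcon⟩)
        exact ball_subset_ball (by linarith) (hS hk.1)
      have h3 := hA k' (by linarith)
      have hne : k' - k ≠ 0 := by
        rw [sub_ne_zero]; rintro rfl; rw [dist_self] at h1; linarith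
      have h4 := hnd _ hne
      rw [dist_eq_norm] at h1 h2 ⊢
      rw [dist_eq_norm]
      have h5 := norm_sub_norm_le (A (k' - k)) (g k' - g k)
      rw [norm_sub_rev (A (k' - k))] at h5
      nlinarith
    intro k hk k' hk'
    rcases eq_or_ne k k' with rfl | hne
    · simp
    have hd : 0 < dist k k' := dist_pos.2 hne
    have hdl : dist k k' ≤ ℓ := by
      have h1 := hS hk.2.1
      have h2 := hS hk'.2.1
      rw [mem_ball] at h1 h2
      have := dist_triangle_right k k' 0
      linarith
    obtain ⟨j, hj1, hj2⟩ := exists_scale hd hdl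
    by_cases hkT : k ∈ T j
    · by_cases hkT' : k' ∈ T j
      · have := hlabs j k k' ((hk.1 j hkT).trans (hk'.1 j hkT').symm) hj2
        linarith
      · exact key j k' hk'.2 hkT' k hj1 hj2
    · rw [dist_comm k, dist_comm (g k)]
      rw [dist_comm] at hj1 hj2
      exact key j k hk.2 hkT k' hj1 hj2

lemma bbeta_le {n : ℕ} {F : Set (Euc (n+1))} {z : Euc (n+1)} {r a b ε : ℝ} (hr : 0 < r)
    (L : AffineSubspace ℝ (Euc (n+1))) (hL : Module.finrank ℝ L.direction = n)
    (hne : ((L : Set (Euc (n+1))) ∩ ball z r).Nonempty) (ha : 0 ≤ a) (hb : 0 ≤ b)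
    (h1 : ∀ y ∈ F ∩ ball z r, infDist y (L : Set (Euc (n+1))) ≤ a)
    (h2 : ∀ y ∈ (L : Set (Euc (n+1))) ∩ ball z r, infDist y F ≤ b)
    (hε : a + b ≤ ε * r) : bbeta n F z r ≤ ε := by
  unfold bbeta
  refine le_trans (csInf_le (a := 0 + r⁻¹ * ((⨆ y ∈ F ∩ ball z r, infDist y (L : Set (Euc (n+1)))) +
      ⨆ y ∈ (L : Set (Euc (n+1))) ∩ ball z r, infDist y F)) ?_ ⟨L, hL, hne, zero_add _⟩) ?_
  · refine ⟨0, ?_⟩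
    rintro _ ⟨L', -, -, rfl⟩
    refine mul_nonneg (by positivity) (add_nonneg ?_ ?_) <;>
    exact Real.iSup_nonneg fun y => Real.iSup_nonneg fun _ => infDist_nonneg
  · rw [zero_add, inv_mul_le_iff₀ hr, mul_comm r]
    refine le_trans (add_le_add ?_ ?_) hε
    · exact Real.iSup_le (fun y => Real.iSup_le (fun hy => h1 y hy) ha) ha
    · exact Real.iSup_le (fun y => Real.iSup_le (fun hy => h2 y hy) hb) hb

/-- Geometric step: good scales have small bilateral beta numbers. -/
lemma geom (n : ℕ) (M : NNReal) {δ ε : ℝ} (hδ : 0 < δ) (hε : 0 < ε) :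
    ∃ α, 0 < α ∧ α ≤ 1 ∧ ∃ H, 0 < H ∧ ∀ (F : Set (Euc (n+1))) (g : Euc n → Euc (n+1)),
      LipschitzWith M g → ∀ K : Set (Euc n), g '' K ⊆ F →
      (∀ k ∈ K, ∀ k' ∈ K, δ * dist k k' ≤ dist (g k) (g k')) →
      ∀ k ∈ K, ∀ t, 0 < t →
      (∀ y ∈ F, dist y (g k) ≤ 500 * t → infDist y (g '' K) ≤ α * t) →
      (∀ u, dist u k ≤ H * t → infDist u K ≤ α * t) →
      (∃ A : Euc n →L[ℝ] Euc (n+1), ∀ u, dist u k ≤ H * t →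
        ‖g u - g k - A (u - k)‖ ≤ α * t) →
      ∀ z, dist z (g k) ≤ t → bbeta n F z (400 * t) ≤ ε := by
  have hD : (0:ℝ) < 4 * δ + 4 * M + 10 := by positivity
  set α := min ε δ / (4 * δ + 4 * M + 10) with hα
  have hα0 : 0 < α := div_pos (lt_min hε hδ) hD
  have hαm : α * (4 * δ + 4 * M + 10) = min ε δ := by rw [hα]; field_simp
  have hM0 : (0:ℝ) ≤ M := M.2
  have hαε : α * (4 * δ + 4 * M + 10) ≤ ε := hαm.le.trans (min_le_left _ _)
  have hαδ : α * (4 * δ + 4 * M + 10) ≤ δ := hαm.le.trans (min_le_right _ _)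
  have hα1 : α ≤ 1 := by
    by_contra hcon
    push Not at hcon
    nlinarith
  set H := 1000 / δ + 3 with hH
  have hH0 : 0 < H := by positivity
  have hHδ : 1000 ≤ H * δ := by rw [hH, add_mul, div_mul_cancel₀ _ hδ.ne']; nlinarith
  have hH3 : 3 ≤ H := by
    have : 0 ≤ 1000 / δ := by positivity
    linarith
  refine ⟨α, hα0, hα1, H, hH0, fun F g hg K hKF hbil k hk t ht hY hU hA z hz => ?_⟩
  obtain ⟨A, hA⟩ := hA
  have hKne : K.Nonempty := ⟨k, hk⟩
  have hαt : 0 < α * t := by positivity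
  have hU' : ∀ u, dist u k ≤ H * t → ∃ k' ∈ K, dist u k' < 2 * (α * t) := fun u hu =>
    (infDist_lt_iff hKne).1 ((hU u hu).trans_lt (by linarith))
  have hY' : ∀ y ∈ F, dist y (g k) ≤ 500 * t → ∃ k' ∈ K, dist y (g k') < 2 * (α * t) := by
    intro y hy hd
    obtain ⟨_, ⟨k', hk', rfl⟩, h⟩ :=
      (infDist_lt_iff (hKne.image g)).1 ((hY y hy hd).trans_lt (by linarith : _ < 2 * (α * t)))
    exact ⟨k', hk', h⟩
  have hα1t : α * t ≤ t := by nlinarith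
  have hAlow : ∀ w, δ / 2 * ‖w‖ ≤ ‖A w‖ := by
    intro w
    rcases eq_or_ne w 0 with rfl | hw
    · simp
    have hwn : 0 < ‖w‖ := norm_pos_iff.2 hw
    set c := t * ‖w‖⁻¹ with hc
    have hc0 : 0 < c := by positivity
    have hcw : ‖c • w‖ = t := by
      rw [norm_smul, Real.norm_of_nonneg hc0.le, hc]; field_simp
    have hduk : dist (k + c • w) k = t := by rw [dist_self_add_left, hcw]
    have hduH : dist (k + c • w) k ≤ H * t := by rw [hduk]; nlinarith
    have h1 := hA (k + c • w) hduH
    rw [add_sub_cancel_left] at h1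
    obtain ⟨k', hk', hd'⟩ := hU' (k + c • w) hduH
    have h2 := hbil k' hk' k hk
    have h3 := dist_triangle_left (k + c • w) k k'
    have h4 := hg.dist_le_mul (k + c • w) k'
    have h5 := dist_triangle_left (g k') (g k) (g (k + c • w))
    have h6 := norm_sub_norm_le (g (k + c • w) - g k) (A (c • w))
    rw [← dist_eq_norm (g (k + c • w)) (g k)] at h6
    rw [dist_comm k' (k + c • w)] at h3
    have h7 : δ * (t - 2 * (α * t)) ≤ δ * dist k' k := by gcongr; linarith
    have h8 : (M:ℝ) * dist (k + c • w) k' ≤ M * (2 * (α * t)) := by gcongr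
    have h9 : α * (4 * δ + 4 * M + 10) * t ≤ δ * t := by gcongr
    have h10 : δ / 2 * t ≤ ‖A (c • w)‖ := by
      nlinarith
    rw [map_smul, norm_smul, Real.norm_of_nonneg hc0.le, hc] at h10
    have h11 : t * (δ / 2) ≤ t * (‖w‖⁻¹ * ‖A w‖) := by linarith
    have h12 := le_of_mul_le_mul_left h11 ht
    rw [← div_eq_inv_mul, le_div_iff₀ hwn] at h12
    exact h12
  have hinj : Function.Injective A := by
    rw [injective_iff_map_eq_zero]
    intro w hw
    have := hAlow w
    rw [hw, norm_zero] at this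
    by_contra hcon
    have : 0 < ‖w‖ := norm_pos_iff.2 hcon
    nlinarith
  set L : AffineSubspace ℝ (Euc (n+1)) :=
    AffineSubspace.mk' (g k) (LinearMap.range (A : Euc n →ₗ[ℝ] Euc (n+1))) with hL
  have hmemL : ∀ w, g k + A w ∈ (L : Set (Euc (n+1))) := by
    intro w
    rw [SetLike.mem_coe, hL, AffineSubspace.mem_mk', vsub_eq_sub, add_sub_cancel_left]
    exact ⟨w, rfl⟩
  refine bbeta_le (by positivity) L ?_ ⟨g k, by simpa using hmemL 0, ?_⟩
    (a := 3 * (α * t)) (b := (1 + 2 * M) * (α * t)) (by positivity) (by positivity) ?_ ?_ ?_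
  · rw [hL, AffineSubspace.direction_mk', LinearMap.finrank_range_of_inj hinj]
    simp
  · rw [mem_ball']; linarith
  · rintro y ⟨hyF, hyz⟩
    rw [mem_ball] at hyz
    have hyk : dist y (g k) ≤ 401 * t := by linarith [dist_triangle y z (g k)]
    obtain ⟨k', hk', hd'⟩ := hY' y hyF (by linarith)
    have h1 := hbil k' hk' k hk
    have h2 := dist_triangle_left (g k') (g k) y
    have h3 : dist k' k ≤ H * t := by
      have : δ * dist k' k ≤ δ * (H * t) := by nlinarith
      exact le_of_mul_le_mul_left this hδ
    have h4 := hA k' h3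
    refine (infDist_le_dist_of_mem (hmemL (k' - k))).trans ?_
    refine (dist_triangle _ (g k') _).trans ?_
    rw [dist_eq_norm (g k'), ← sub_sub]
    linarith
  · rintro y ⟨hyL, hyz⟩
    rw [SetLike.mem_coe, hL, AffineSubspace.mem_mk', vsub_eq_sub] at hyL
    obtain ⟨w, hw⟩ := hyL
    have hw' : A w = y - g k := hw
    rw [mem_ball] at hyz
    have hyk : dist y (g k) ≤ 401 * t := by linarith [dist_triangle y z (g k)]
    have h1 := hAlow w
    rw [hw', ← dist_eq_norm] at h1
    have h2 : ‖w‖ ≤ H * t := by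
      have : δ * ‖w‖ ≤ δ * (H * t) := by nlinarith
      exact le_of_mul_le_mul_left this hδ
    have h3 : dist (k + w) k ≤ H * t := by rwa [dist_self_add_left]
    have h4 := hA _ h3
    rw [add_sub_cancel_left, hw'] at h4
    obtain ⟨k', hk', hd'⟩ := hU' _ h3
    have h5 := hg.dist_le_mul (k + w) k'
    have h8 : (M:ℝ) * dist (k + w) k' ≤ M * (2 * (α * t)) := by gcongr
    refine (infDist_le_dist_of_mem (hKF ⟨k', hk', rfl⟩)).trans ?_
    refine (dist_triangle _ (g (k + w)) _).trans ?_
    rw [dist_comm y, dist_eq_norm (g (k + w)) y]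
    have e : g (k + w) - g k - (y - g k) = g (k + w) - y := by abel
    rw [e] at h4
    linarith
  · have h9 : α * (4 * δ + 4 * M + 10) * t ≤ ε * t := by gcongr
    nlinarith [mul_pos hα0 ht, mul_pos hε ht, mul_nonneg hM0 hαt.le, mul_pos hδ hαt]

lemma lip_extend {n d : ℕ} {M : NNReal} {g0 : Euc n → Euc d} {r ℓ : ℝ} (hr : 0 < r)
    (hrl : r ≤ ℓ) (hg0 : LipschitzOnWith M g0 (ball 0 r)) :
    ∃ g : Euc n → Euc d, LipschitzWith (lipschitzExtensionConstant (Euc d) * M) g ∧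
      EqOn g0 g (ball 0 r) ∧ ∀ x, 2 * ℓ ≤ ‖x‖ → g x = g0 0 := by
  classical
  set h : Euc n → Euc d := fun x => if ‖x‖ < r then g0 x else g0 0 with hh
  have hin : ∀ x, ‖x‖ < r → h x = g0 x := fun x hx => by simp [hh, hx]
  have hout : ∀ x, 2 * ℓ ≤ ‖x‖ → h x = g0 0 := fun x hx => by
    simp only [hh]; rw [if_neg (by linarith)]
  have hlip0 : ∀ x y, ‖x‖ < r → 2 * ℓ ≤ ‖y‖ → dist (g0 x) (g0 0) ≤ M * dist x y := by
    intro x y hx hy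
    have h1 := hg0.dist_le_mul x (by simpa using hx) 0 (by simpa using hr)
    refine h1.trans ?_
    gcongr
    rw [dist_zero_right]
    have := norm_sub_norm_le y x
    rw [← dist_eq_norm, dist_comm] at this
    linarith
  have hlip : LipschitzOnWith M h (ball 0 r ∪ {x | 2 * ℓ ≤ ‖x‖}) := by
    apply LipschitzOnWith.of_dist_le_mul
    rintro x (hx | hx) y (hy | hy)
    · rw [mem_ball_zero_iff] at hx hy
      rw [hin x hx, hin y hy]
      exact hg0.dist_le_mul x (by simpa using hx) y (by simpa using hy)
    · rw [mem_ball_zero_iff] at hx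
      rw [hin x hx, hout y hy]; exact hlip0 x y hx hy
    · rw [mem_ball_zero_iff] at hy
      rw [hin y hy, hout x hx, dist_comm, dist_comm x]; exact hlip0 y x hy hx
    · rw [hout x hx, hout y hy, dist_self]; positivity
  obtain ⟨g, hg, heq⟩ := hlip.extend_finite_dimension
  refine ⟨g, hg, fun x hx => ?_, fun x hx => ?_⟩
  · rw [← heq (Or.inl hx), hin x (by simpa using hx)]
  · rw [← heq (Or.inr hx), hout x hx]

lemma bilip_measure {n d : ℕ} {δ : ℝ} (hδ : 0 < δ) (g : Euc n → Euc d) (K : Set (Euc n))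
    (h : ∀ k ∈ K, ∀ k' ∈ K, δ * dist k k' ≤ dist (g k) (g k')) :
    ENNReal.ofReal (δ ^ n) * μH[n] K ≤ μH[n] (g '' K) := by
  rcases K.eq_empty_or_nonempty with rfl | hne
  · simp
  have hinj : InjOn g K := by
    intro k hk k' hk' he
    have := h k hk k' hk'
    rw [he, dist_self] at this
    have h0 := dist_nonneg (x := k) (y := k')
    exact dist_le_zero.1 (by nlinarith)
  have := hne
  set f := Function.invFunOn g K with hf
  have hleft : ∀ k ∈ K, f (g k) = k := fun k hk => hinj.leftInvOn_invFunOn hk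
  have hl : LipschitzOnWith (Real.toNNReal δ⁻¹) f (g '' K) := by
    apply LipschitzOnWith.of_dist_le_mul
    rintro _ ⟨k, hk, rfl⟩ _ ⟨k', hk', rfl⟩
    rw [hleft k hk, hleft k' hk', Real.coe_toNNReal _ (by positivity)]
    rw [← div_eq_inv_mul, le_div_iff₀ hδ, mul_comm]
    exact h k hk k' hk'
  have him : f '' (g '' K) = K := by
    rw [image_image]
    ext x; constructor
    · rintro ⟨k, hk, rfl⟩; show f (g k) ∈ K; rw [hleft k hk]; exact hk
    · intro hx; exact ⟨x, hx, hleft x hx⟩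
  have h1 := hl.hausdorffMeasure_image_le (Nat.cast_nonneg n)
  rw [him, ENNReal.rpow_natCast] at h1
  have e1 : ((Real.toNNReal δ⁻¹ : NNReal) : ENNReal) ^ n = ENNReal.ofReal ((δ⁻¹) ^ n) := by
    rw [ENNReal.ofReal_pow (by positivity)]; rfl
  rw [e1] at h1
  refine (mul_le_mul_right h1 _).trans (le_of_eq ?_)
  rw [← mul_assoc, ← ENNReal.ofReal_mul (by positivity), ← mul_pow, mul_inv_cancel₀ hδ.ne']
  simp

/-- The set of points which see a bad bilateral beta number at scale `t`. -/
def BadSet (n : ℕ) (F : Set (Euc (n+1))) (ε t : ℝ) : Set (Euc (n+1)) :=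
  {x | ∃ z, dist z x ≤ t ∧ ε < bbeta n F z (400 * t)}

/-- Key packing lemma on a big piece. -/
lemma key_packing (n : ℕ) (hn : 0 < n) (M : NNReal) {C₁ cl θ ε : ℝ} (hC₁ : 0 < C₁) (hcl : 0 < cl)
    (hθ : 0 < θ) (hε : 0 < ε) :
    ∃ η, 0 < η ∧ ∃ C, 0 < C ∧ ∀ ℓ, 0 < ℓ → ∀ F : Set (Euc (n+1)), IsClosed F →
      ∀ μ : Measure (Euc (n+1)), μ = (μH[n]).restrict F →
      (∀ x s, 0 < s → μ (closedBall x s) ≤ ENNReal.ofReal (C₁ * s ^ n)) →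
      (∀ x ∈ F, ∀ s, 0 < s → s ≤ ℓ → ENNReal.ofReal (cl * s ^ n) ≤ μ (ball x s)) →
      ∀ (x₀ : Euc (n+1)) (r : ℝ), 0 < r → r ≤ ℓ / 2 → ∀ g0 : Euc n → Euc (n+1),
      LipschitzOnWith M g0 (ball 0 r) →
      ENNReal.ofReal (θ * ℓ ^ n) ≤ μH[n] (F ∩ ball x₀ r ∩ g0 '' ball 0 r) →
      ∃ E ⊆ F ∩ ball x₀ r, ENNReal.ofReal (η * ℓ ^ n) ≤ μ E ∧
        ∑' j : ℕ, μ (E ∩ BadSet n F ε (ℓ / 2 ^ j)) ≤ ENNReal.ofReal (C * ℓ ^ n) := by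
  have := haus_haar n
  set ν : Measure (Euc n) := μH[n] with hν
  have hub := ub_pos ν
  set M' := lipschitzExtensionConstant (Euc (n+1)) * M with hM'
  obtain ⟨δ, hδ, η, hη, hbil⟩ := bilip_piece n hn (d := n + 1) M' hC₁ hθ
  obtain ⟨α, hα, hα1, H, hH, hgeom⟩ := geom n M' hδ hε
  obtain ⟨Ca, hCa, hda⟩ := density_packing n hC₁ hcl hα hα1 (H := 500) (by norm_num)
  obtain ⟨Cb, hCb, hdb⟩ := density_packing n hub hub hα hα1 hH
  obtain ⟨Cc, hCc, hdc⟩ := quant_diff (d := n + 1) ν M' hα hH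
  refine ⟨δ ^ n * η, by positivity, Ca + ((M' + 1) ^ n * Cb + (M' + 1) ^ n * Cc), by positivity,
    fun ℓ hℓ F hF μ hμ hμub hμlb x₀ r hr hrl g0 hg0 hθg => ?_⟩
  have hμle : ∀ A, μ A ≤ μH[n] A := fun A => by rw [hμ]; exact Measure.restrict_apply_le _ _
  have hμF : ∀ A ⊆ F, μ A = μH[n] A := fun A hA => by
    rw [hμ, Measure.restrict_apply' hF.measurableSet, inter_eq_left.2 hA]
  obtain ⟨g, hg, hgeq, hgout⟩ := lip_extend hr (by linarith : r ≤ ℓ) hg0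
  set S : Set (Euc n) := {k | k ∈ ball (0 : Euc n) r ∧ g k ∈ F ∩ ball x₀ r} with hS
  obtain ⟨K, hKS, hKη, hKbil⟩ := hbil ℓ hℓ μ hμle hμub g hg (g0 0) hgout S
    (fun k hk => ball_subset_ball hrl hk.1) (by
      refine hθg.trans ?_
      rw [← hμF _ (fun x hx => hx.1.1)]
      refine measure_mono ?_
      rintro x ⟨hx, k, hk, rfl⟩
      refine ⟨k, ⟨hk, ?_⟩, (hgeq hk).symm⟩
      rw [← hgeq hk]; exact hx)
  have hEF : g '' K ⊆ F ∩ ball x₀ r := by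
    rintro _ ⟨k, hk, rfl⟩; exact (hKS hk).2
  refine ⟨g '' K, hEF, ?_, ?_⟩
  · rw [hμF _ (hEF.trans inter_subset_left)]
    refine le_trans ?_ (bilip_measure hδ g K hKbil)
    rw [mul_assoc, ENNReal.ofReal_mul (by positivity)]
    exact mul_le_mul_right hKη _
  obtain ⟨T, hTm, hTs, hT⟩ := hdc ℓ hℓ g hg (g0 0) hgout
  have ha := hda μ F (g '' K) x₀ ℓ hℓ hμub hμlb
    (fun x hx => ball_subset_ball (by linarith) (hEF hx).2)
  have hb := hdb ν univ K 0 ℓ hℓ (fun x s hs => (haar_closedBall ν x hs).le)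
    (fun x _ s hs _ => (haar_ball ν x hs).ge)
    (fun x hx => ball_subset_ball (by linarith) (hKS hx).1)
  set Ba : ℕ → Set (Euc (n+1)) := fun j => {k ∈ g '' K | ∃ y ∈ F, dist y k ≤ 500 * (ℓ / 2 ^ j) ∧
        α * (ℓ / 2 ^ j) < infDist y (g '' K)} with hBa
  set Bb : ℕ → Set (Euc n) := fun j => {k ∈ K | ∃ y ∈ (univ : Set (Euc n)),
    dist y k ≤ H * (ℓ / 2 ^ j) ∧ α * (ℓ / 2 ^ j) < infDist y K} with hBb
  have hsub : ∀ j : ℕ, g '' K ∩ BadSet n F ε (ℓ / 2 ^ j) ⊆ Ba j ∪ (g '' Bb j ∪ g '' T j) := by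
    rintro j _ ⟨⟨k, hk, rfl⟩, z, hz, hzε⟩
    by_contra hcon
    rw [mem_union, mem_union, not_or, not_or] at hcon
    obtain ⟨h1, h2, h3⟩ := hcon
    refine absurd hzε (not_lt.2 ?_)
    refine hgeom F g hg K (hEF.trans inter_subset_left) hKbil k hk _ (by positivity) ?_ ?_ ?_ z hz
    · intro y hy hd
      by_contra hc
      exact h1 ⟨⟨k, hk, rfl⟩, y, hy, hd, not_le.1 hc⟩
    · intro u hu
      by_contra hc
      exact h2 ⟨k, ⟨hk, u, mem_univ _, hu, not_le.1 hc⟩, rfl⟩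
    · exact hT j k fun hkT => h3 ⟨k, hkT, rfl⟩
  have hterm : ∀ j : ℕ, μ (g '' K ∩ BadSet n F ε (ℓ / 2 ^ j)) ≤ μ (Ba j) +
      (ENNReal.ofReal ((M' + 1 : ℝ) ^ n) * ν (Bb j) +
        ENNReal.ofReal ((M' + 1 : ℝ) ^ n) * ν (T j)) := by
    intro j
    refine (measure_mono (hsub j)).trans ((measure_union_le _ _).trans
      (add_le_add_right ((measure_union_le _ _).trans (add_le_add ?_ ?_)) _))
    · exact (hμle _).trans (lip_image_le hg _)
    · exact (hμle _).trans (lip_image_le hg _)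
  refine (ENNReal.tsum_le_tsum hterm).trans ?_
  rw [ENNReal.tsum_add, ENNReal.tsum_add, ENNReal.tsum_mul_left, ENNReal.tsum_mul_left]
  refine (add_le_add ha (add_le_add (mul_le_mul_right hb _) (mul_le_mul_right hTs _))).trans
    (le_of_eq ?_)
  rw [← ENNReal.ofReal_mul (by positivity), ← ENNReal.ofReal_mul (by positivity),
    ← ENNReal.ofReal_add (by positivity) (by positivity),
    ← ENNReal.ofReal_add (by positivity) (by positivity)]
  congr 1
  ring

lemma ad_upper (n : ℕ) (hn : 0 < n) {C₀ : ℝ} (hC₀ : 1 ≤ C₀) :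
    ∃ C₁ : ℝ, 1 ≤ C₁ ∧ ∀ F : Set (Euc (n+1)), ADRegular n C₀ F →
      ∀ x s, 0 < s → μH[n] (F ∩ closedBall x s) ≤ ENNReal.ofReal (C₁ * s ^ n) := by
  obtain ⟨t, -, htf, htc⟩ := finite_cover_balls_of_compact
    (isCompact_closedBall (0 : Euc (n+1)) 1) (e := 1 / 2) (by norm_num)
  set N : ℕ := htf.toFinset.card with hN
  have h4 : (1 : ℝ) ≤ 4 ^ n := one_le_pow₀ (by norm_num)
  refine ⟨(N + 1) * (C₀ * 4 ^ n), ?_, fun F hF x s hs => ?_⟩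
  · have : 1 ≤ C₀ * 4 ^ n := one_le_mul_of_one_le_of_one_le hC₀ h4
    nlinarith [Nat.cast_nonneg (α := ℝ) N]
  have hsn : 0 < s ^ n := by positivity
  rcases (F ∩ closedBall x s).eq_empty_or_nonempty with he | ⟨y, hyF, hyx⟩
  · rw [he]; simp
  by_cases hd : ENNReal.ofReal (4 * s) ≤ EMetric.diam F
  · have h1 := (hF y hyF (4 * s) (by positivity) hd).2
    refine le_trans (measure_mono ?_) (h1.trans (ENNReal.ofReal_le_ofReal ?_))
    · refine inter_subset_inter_right _ fun z hz => ?_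
      rw [mem_ball]
      rw [mem_closedBall] at hz hyx
      have := dist_triangle_right z y x
      linarith
    · rw [mul_pow]
      have : 0 ≤ (N : ℝ) * (C₀ * 4 ^ n) * s ^ n := by positivity
      nlinarith
  · push Not at hd
    have hfin : EMetric.diam F ≠ ⊤ := (lt_of_lt_of_le hd le_top).ne
    set D := (EMetric.diam F).toReal with hD
    have hDe : ENNReal.ofReal D = EMetric.diam F := ENNReal.ofReal_toReal hfin
    have hDs : D < 4 * s := by
      rw [← hDe] at hd
      exact (ENNReal.ofReal_lt_ofReal_iff (by positivity)).1 hd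
    have hdist : ∀ a ∈ F, ∀ b ∈ F, dist a b ≤ D := fun a ha b hb => by
      have : edist a b ≤ EMetric.diam F := EMetric.edist_le_diam_of_mem ha hb
      rw [edist_dist, ← hDe] at this
      exact (ENNReal.ofReal_le_ofReal_iff ENNReal.toReal_nonneg).1 this
    rcases (ENNReal.toReal_nonneg (a := EMetric.diam F)).eq_or_lt with h0 | h0
    · have hsub : F ⊆ {y} := fun a ha => by
        have := hdist a ha y hyF
        rw [hD, ← h0] at this
        exact dist_le_zero.1 this
      have := Measure.noAtoms_hausdorff (Euc (n+1)) (d := (n : ℝ)) (by exact_mod_cast hn)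
      refine (measure_mono (inter_subset_left.trans hsub)).trans ?_
      rw [measure_singleton]; exact zero_le
    · have hDpos : 0 < D := h0
      have hb : ∀ z : Euc (n+1), μH[n] (F ∩ ball (y + D • z) (D / 2))
          ≤ ENNReal.ofReal (C₀ * D ^ n) := fun z => by
        rcases (F ∩ ball (y + D • z) (D / 2)).eq_empty_or_nonempty with he | ⟨w, hw, hwz⟩
        · rw [he]; simp
        refine le_trans (measure_mono ?_) (hF w hw D h0 hDe.le).2
        refine inter_subset_inter_right _ fun a ha => ?_
        rw [mem_ball] at ha hwz ⊢
        have := dist_triangle_right a w (y + D • z)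
        linarith
      have hcov : F ∩ closedBall x s ⊆ ⋃ z ∈ htf.toFinset, F ∩ ball (y + D • z) (D / 2) := by
        rintro a ⟨ha, -⟩
        have h1 : D⁻¹ • (a - y) ∈ closedBall (0 : Euc (n+1)) 1 := by
          rw [mem_closedBall, dist_zero_right, norm_smul, Real.norm_of_nonneg (by positivity),
            ← dist_eq_norm, inv_mul_le_iff₀ hDpos, mul_one]
          exact hdist a ha y hyF
        have h2 := htc h1
        simp only [mem_iUnion, exists_prop] at h2 ⊢
        obtain ⟨z, hz, hza⟩ := h2
        refine ⟨z, htf.mem_toFinset.2 hz, ha, ?_⟩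
        rw [mem_ball, dist_eq_norm] at hza ⊢
        have e : a - (y + D • z) = D • (D⁻¹ • (a - y) - z) := by
          rw [smul_sub, smul_smul, mul_inv_cancel₀ hDpos.ne', one_smul]; abel
        rw [e, norm_smul, Real.norm_of_nonneg hDpos.le]
        nlinarith
      refine (measure_mono hcov).trans ((measure_biUnion_finset_le _ _).trans ?_)
      refine (Finset.sum_le_sum fun z _ => hb z).trans ?_
      rw [Finset.sum_const, nsmul_eq_mul, ← hN, ← ENNReal.ofReal_natCast,
        ← ENNReal.ofReal_mul (by positivity)]
      refine ENNReal.ofReal_le_ofReal ?_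
      have h5 : D ^ n ≤ 4 ^ n * s ^ n := by
        rw [← mul_pow]; exact pow_le_pow_left₀ hDpos.le hDs.le n
      have h6 : C₀ * D ^ n ≤ C₀ * 4 ^ n * s ^ n := by
        rw [mul_assoc]; exact mul_le_mul_of_nonneg_left h5 (by linarith)
      have h7 : (0:ℝ) ≤ N := Nat.cast_nonneg N
      have h8 : 0 ≤ C₀ * 4 ^ n * s ^ n := by positivity
      nlinarith [mul_le_mul_of_nonneg_left h6 h7]

/-- Each cube contains a big piece on which the bad scales are packed. -/
lemma cube_piece (n : ℕ) (hn : 0 < n) {C₀ Cl θ M ε : ℝ} (hC₀ : 1 ≤ C₀) (hCl : 1 ≤ Cl)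
    (hθ : 0 < θ) (hε : 0 < ε) :
    ∃ η, 0 < η ∧ ∃ C, 0 < C ∧ ∀ F : Set (Euc (n+1)), IsClosed F →
      UnifRectifiable n C₀ θ M F → ∀ μ : Measure (Euc (n+1)), μ = (μH[n]).restrict F →
      ∀ (L : DSLattice n F μ Cl) (R : Cube n), L.mem R →
      ∃ E ⊆ R.2, ENNReal.ofReal (η * sideLen R ^ n) ≤ μ E ∧
        ∑' j : ℕ, μ (E ∩ BadSet n F ε (sideLen R / 2 ^ j))
          ≤ ENNReal.ofReal (C * sideLen R ^ n) := by
  obtain ⟨C₁, hC₁, hup⟩ := ad_upper n hn hC₀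
  set c2 : ℝ := 1 / (2 * C₁ * Cl) with hc2
  have hc2p : 0 < c2 := by positivity
  have hc2l : c2 ≤ Cl⁻¹ / 2 := by
    rw [hc2, div_le_div_iff₀ (by positivity) (by positivity)]
    have : Cl⁻¹ * Cl = 1 := inv_mul_cancel₀ (by positivity)
    nlinarith
  have hCli : Cl⁻¹ ≤ 1 := inv_le_one_of_one_le₀ hCl
  have hc21 : c2 ≤ 1 := by linarith
  obtain ⟨η, hη, C, hC, hkey⟩ := key_packing n hn (Real.toNNReal M) (C₁ := C₁)
    (cl := C₀⁻¹ * c2 ^ n) (θ := θ * c2 ^ n) (by linarith) (by positivity) (by positivity) hε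
  refine ⟨η, hη, C, hC, fun F hF hUR μ hμ L R hR => ?_⟩
  have hl : 0 < sideLen R := by unfold sideLen; positivity
  set ℓ := sideLen R with hℓ
  have hμF : ∀ A, μ A = μH[n] (F ∩ A) := fun A => by
    rw [hμ, Measure.restrict_apply' hF.measurableSet, inter_comm]
  have hz := L.center_mem _ _ hR
  have hzF := L.subset_F _ _ hR hz
  have hdiam : ENNReal.ofReal (c2 * ℓ) ≤ EMetric.diam F := by
    by_contra hcon
    push Not at hcon
    have h1 := L.measure_lb _ _ hR
    have h2 : μ R.2 ≤ μH[n] (F ∩ closedBall (L.center R.2) (c2 * ℓ)) := by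
      rw [hμF]
      refine measure_mono fun a ha => ⟨ha.1, ?_⟩
      have := (EMetric.edist_le_diam_of_mem ha.1 hzF).trans hcon.le
      rw [edist_dist] at this
      exact (ENNReal.ofReal_le_ofReal_iff (by positivity)).1 this
    have h3 := h1.trans (h2.trans (hup F hUR.1 _ _ (by positivity)))
    change ENNReal.ofReal (Cl⁻¹ * ℓ ^ n) ≤ _ at h3
    rw [ENNReal.ofReal_le_ofReal_iff (by positivity), mul_pow, ← mul_assoc] at h3
    have h4 := le_of_mul_le_mul_right h3 (by positivity : 0 < ℓ ^ n)
    have h5 : c2 ^ n ≤ c2 := pow_le_of_le_one hc2p.le hc21 hn.ne'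
    have h6 : C₁ * c2 = Cl⁻¹ / 2 := by rw [hc2]; field_simp
    have h7 : 0 < Cl⁻¹ := by positivity
    nlinarith
  have hdiam' : ∀ s, s ≤ ℓ → ENNReal.ofReal (c2 * s) ≤ EMetric.diam F := fun s hs =>
    (ENNReal.ofReal_le_ofReal (mul_le_mul_of_nonneg_left hs hc2p.le)).trans hdiam
  obtain ⟨g, hg, hgm⟩ := hUR.2.2.2 _ hzF (c2 * ℓ) (by positivity) hdiam
  obtain ⟨E, hE, hE1, hE2⟩ := hkey ℓ hl F hF μ hμ
    (fun x s hs => by rw [hμF]; exact hup F hUR.1 x s hs)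
    (fun x hx s hs hsl => by
      rw [hμF]
      refine le_trans (le_of_eq ?_) ((hUR.1 x hx (c2 * s) (by positivity) (hdiam' s hsl)).1.trans
        (measure_mono (inter_subset_inter_right _ (ball_subset_ball (by nlinarith)))))
      rw [mul_pow, mul_assoc])
    (L.center R.2) (c2 * ℓ) (by positivity) (by nlinarith) g hg
    (by refine le_trans (le_of_eq ?_) hgm; rw [mul_pow, mul_assoc])
  refine ⟨E, fun x hx => ?_, hE1, hE2⟩
  by_contra hxR
  have h1 := L.center_far _ _ hR x ⟨(hE hx).1, hxR⟩
  have h2 := (hE hx).2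
  rw [mem_ball, dist_comm] at h2
  change Cl⁻¹ * ℓ ≤ _ at h1
  have h7 : 0 < Cl⁻¹ := by positivity
  nlinarith

open Classical in
/-- Number of cubes of `s` inside `q` containing `x`. -/
def cubeCount {n : ℕ} (s : Finset (Cube n)) (q : Cube n) (x : Euc (n+1)) : ℕ :=
  (s.filter fun q' => (q.1 ≤ q'.1 ∧ q'.2 ⊆ q.2) ∧ x ∈ q'.2).card

lemma measurable_cubeCount {n : ℕ} (s : Finset (Cube n)) (q : Cube n)
    (hs : ∀ q' ∈ s, MeasurableSet q'.2) : Measurable (cubeCount s q) := by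
  classical
  have e : cubeCount s q = fun x => ∑ q' ∈ s,
      if (q.1 ≤ q'.1 ∧ q'.2 ⊆ q.2) ∧ x ∈ q'.2 then 1 else 0 := by
    funext x; rw [cubeCount, Finset.card_filter]
  rw [e]
  refine Finset.measurable_fun_sum _ fun q' hq' => ?_
  refine Measurable.ite ?_ measurable_const measurable_const
  exact (MeasurableSet.const _).inter (hs q' hq')

lemma bad_packing (n : ℕ) (hn : 0 < n) {C₀ Cl θ M ε : ℝ} (hC₀ : 1 ≤ C₀) (hCl : 1 ≤ Cl)
    (hθ : 0 < θ) (hε : 0 < ε) :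
    ∃ K : ℝ, 0 < K ∧ ∀ F : Set (Euc (n+1)), IsClosed F →
      UnifRectifiable n C₀ θ M F → ∀ μ : Measure (Euc (n+1)), μ = (μH[n]).restrict F →
      ∀ (L : DSLattice n F μ Cl) (R₀ : Cube n), L.mem R₀ →
      ∑' q : {q : Cube n | InD L R₀ q ∧ ε < bbetaQ n L F q}, μ (q : Cube n).2
        ≤ ENNReal.ofReal K * μ R₀.2 := by
  classical
  obtain ⟨η, hη, C, hC, hp⟩ := cube_piece n hn (M := M) hC₀ hCl hθ hε
  obtain ⟨N, hN⟩ := exists_nat_ge (2 * C / η)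
  refine ⟨2 * Cl / η * (N + 1), by positivity, fun F hF hUR μ hμ L R₀ hR₀ => ?_⟩
  set B : Set (Cube n) := {q : Cube n | InD L R₀ q ∧ ε < bbetaQ n L F q} with hB
  rw [ENNReal.tsum_eq_iSup_sum]
  refine iSup_le fun s' => ?_
  set s : Finset (Cube n) := s'.map (Function.Embedding.subtype _) with hs
  have hsB : ∀ q ∈ s, InD L R₀ q ∧ ε < bbetaQ n L F q := by
    intro q hq
    obtain ⟨a, -, rfl⟩ := Finset.mem_map.1 hq
    exact a.2
  have e1 : ∑ a ∈ s', μ (a : Cube n).2 = ∑ q ∈ s, μ q.2 := by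
    rw [hs, Finset.sum_map]; rfl
  rw [e1]
  have hsm : ∀ q ∈ s, MeasurableSet q.2 := fun q hq => L.measurableSet _ _ (hsB q hq).1.1
  set E' : Cube n → Set (Euc (n+1)) := fun q => {x | x ∈ q.2 ∧ cubeCount s q x ≤ N} with hE'
  have hE'm : ∀ q ∈ s, MeasurableSet (E' q) := fun q hq =>
    (hsm q hq).inter (measurableSet_le (measurable_cubeCount s q hsm) measurable_const)
  -- lower bound
  have hlow : ∀ q ∈ s, μ q.2 ≤ ENNReal.ofReal (2 * Cl / η) * μ (E' q) := by
    intro q hq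
    have hqm := (hsB q hq).1.1
    have hl : 0 < sideLen q := by unfold sideLen; positivity
    obtain ⟨E, hE, hE1, hE2⟩ := hp F hF hUR μ hμ L q hqm
    set S : ℕ → Set (Euc (n+1)) := fun j => E ∩ BadSet n F ε (sideLen q / 2 ^ j) with hS
    set W := {x | ((N + 1 : ℕ) : ENNReal) ≤ cnt S x} with hW
    have hch := (cheb μ S ((N + 1 : ℕ) : ENNReal)).trans hE2
    have hWb : μ W ≤ ENNReal.ofReal (η / 2 * sideLen q ^ n) := by
      have h1 : ENNReal.ofReal (C * sideLen q ^ n) ≤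
          ((N + 1 : ℕ) : ENNReal) * ENNReal.ofReal (η / 2 * sideLen q ^ n) := by
        rw [← ENNReal.ofReal_natCast, ← ENNReal.ofReal_mul (by positivity)]
        refine ENNReal.ofReal_le_ofReal ?_
        rw [← mul_assoc]
        refine mul_le_mul_of_nonneg_right ?_ (by positivity)
        rw [div_le_iff₀ hη] at hN
        push_cast
        nlinarith
      have h2 := hch.trans h1
      rwa [ENNReal.mul_le_mul_iff_right (by simp) (ENNReal.natCast_ne_top _)] at h2
    have hsub : E ⊆ E' q ∪ W := by
      intro x hx
      by_cases hc : cubeCount s q x ≤ N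
      · exact Or.inl ⟨hE hx, hc⟩
      right
      push Not at hc
      show ((N + 1 : ℕ) : ENNReal) ≤ cnt S x
      refine le_trans (Nat.cast_le.2 hc) ?_
      set T := s.filter fun q' => (q.1 ≤ q'.1 ∧ q'.2 ⊆ q.2) ∧ x ∈ q'.2 with hT
      have hinj : Set.InjOn (fun q' : Cube n => (q'.1 - q.1).toNat) (T : Set (Cube n)) := by
        intro a ha b hb hab
        have ha' := (Finset.mem_filter.1 (Finset.mem_coe.1 ha))
        have hb' := (Finset.mem_filter.1 (Finset.mem_coe.1 hb))
        have h1 : a.1 = b.1 := by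
          have := ha'.2.1.1
          have := hb'.2.1.1
          simp only at hab
          omega
        have h2 : a.2 = b.2 := by
          by_contra hne
          have hbm : b.2 ∈ L.cube a.1 := by rw [h1]; exact (hsB b hb'.1).1.1
          exact Set.disjoint_left.1 (L.disj a.1 a.2 (hsB a ha'.1).1.1 b.2 hbm hne)
            ha'.2.2 hb'.2.2
        exact Prod.ext h1 h2
      have hcard : cubeCount s q x = (T.image fun q' : Cube n => (q'.1 - q.1).toNat).card := by
        rw [Finset.card_image_of_injOn hinj]; rfl
      rw [hcard, ← nsmul_one, ← Finset.sum_const]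
      refine le_trans (Finset.sum_le_sum (g := fun j => (S j).indicator 1 x) ?_)
        (ENNReal.sum_le_tsum _)
      intro j hj
      obtain ⟨a, ha, rfl⟩ := Finset.mem_image.1 hj
      have ha' := Finset.mem_filter.1 ha
      have hxS : x ∈ S ((a.1 - q.1).toNat) := by
        refine ⟨hx, L.center a.2, ?_, ?_⟩
        all_goals
          have et : sideLen q / 2 ^ ((a.1 - q.1).toNat) = sideLen a := by
            unfold sideLen
            rw [← zpow_natCast, Int.toNat_of_nonneg (by have := ha'.2.1.1; omega),
              ← zpow_sub₀ (by norm_num)]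
            congr 1; ring
          rw [et]
        · have h1 : edist (L.center a.2) x ≤ ENNReal.ofReal (sideLen a) :=
            (EMetric.edist_le_diam_of_mem (L.center_mem _ _ (hsB a ha'.1).1.1) ha'.2.2).trans
              (L.diam_le _ _ (hsB a ha'.1).1.1)
          rw [edist_dist] at h1
          exact (ENNReal.ofReal_le_ofReal_iff (by unfold sideLen; positivity)).1 h1
        · have h1 := (hsB a ha'.1).2
          unfold bbetaQ at h1
          convert h1 using 2
          ring
      rw [Set.indicator_of_mem hxS]; rfl
    have h3 := hE1.trans ((measure_mono hsub).trans (measure_union_le _ _))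
    have h4 : ENNReal.ofReal (η / 2 * sideLen q ^ n) ≤ μ (E' q) := by
      have h5 : ENNReal.ofReal (η * sideLen q ^ n) =
          ENNReal.ofReal (η / 2 * sideLen q ^ n) + ENNReal.ofReal (η / 2 * sideLen q ^ n) := by
        rw [← ENNReal.ofReal_add (by positivity) (by positivity)]; congr 1; ring
      rw [h5] at h3
      have h6 := h3.trans (add_le_add_right hWb _)
      exact (ENNReal.add_le_add_iff_right ENNReal.ofReal_ne_top).1 h6
    refine (L.measure_ub _ _ hqm).trans (le_trans (le_of_eq ?_) (mul_le_mul_right h4 _))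
    rw [← ENNReal.ofReal_mul (by positivity)]
    congr 1
    change Cl * sideLen q ^ n = _
    field_simp
  -- bounded overlap
  have hov : ∀ x, ∑ q ∈ s, (E' q).indicator (1 : Euc (n+1) → ENNReal) x ≤
      R₀.2.indicator (fun _ => (N : ENNReal)) x := by
    intro x
    have e2 : ∑ q ∈ s, (E' q).indicator (1 : Euc (n+1) → ENNReal) x =
        ((s.filter fun q => x ∈ E' q).card : ENNReal) := by
      rw [Finset.card_filter, Nat.cast_sum]
      refine Finset.sum_congr rfl fun q _ => ?_
      by_cases h : x ∈ E' q <;> simp [h]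
    rw [e2]
    rcases (s.filter fun q => x ∈ E' q).eq_empty_or_nonempty with he | hne
    · rw [he]; simp
    obtain ⟨q, hq, hmin⟩ := Finset.exists_min_image _ (fun q : Cube n => q.1) hne
    have hq' := Finset.mem_filter.1 hq
    rw [Set.indicator_of_mem ((hsB q hq'.1).1.2.1 hq'.2.1)]
    refine Nat.cast_le.2 (le_trans (Finset.card_le_card ?_) hq'.2.2)
    intro a ha
    have ha' := Finset.mem_filter.1 ha
    refine Finset.mem_filter.2 ⟨ha'.1, ⟨hmin a ha, ?_⟩, ha'.2.1⟩
    exact L.nested _ _ (hmin a ha) _ (hsB a ha'.1).1.1 _ (hsB q hq'.1).1.1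
      ⟨x, ha'.2.1, hq'.2.1⟩
  calc ∑ q ∈ s, μ q.2 ≤ ∑ q ∈ s, ENNReal.ofReal (2 * Cl / η) * μ (E' q) :=
        Finset.sum_le_sum hlow
    _ = ENNReal.ofReal (2 * Cl / η) * ∑ q ∈ s, μ (E' q) := by rw [Finset.mul_sum]
    _ = ENNReal.ofReal (2 * Cl / η) *
        ∫⁻ x, ∑ q ∈ s, (E' q).indicator (1 : Euc (n+1) → ENNReal) x ∂μ := by
      rw [lintegral_finset_sum' _ fun q hq => (measurable_one.indicator (hE'm q hq)).aemeasurable]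
      congr 1
      exact Finset.sum_congr rfl fun q hq => (lintegral_indicator_one (hE'm q hq)).symm
    _ ≤ ENNReal.ofReal (2 * Cl / η) * ∫⁻ x, R₀.2.indicator (fun _ => (N : ENNReal)) x ∂μ :=
      mul_le_mul_right (lintegral_mono hov) _
    _ = ENNReal.ofReal (2 * Cl / η) * (N * μ R₀.2) := by
      rw [lintegral_indicator_const (L.measurableSet _ _ hR₀)]
    _ ≤ ENNReal.ofReal (2 * Cl / η * (N + 1)) * μ R₀.2 := by
      rw [ENNReal.ofReal_mul (by positivity), mul_assoc]
      refine mul_le_mul_right ?_ _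
      refine mul_le_mul_left ?_ _
      rw [← ENNReal.ofReal_natCast]
      exact ENNReal.ofReal_le_ofReal (by linarith)

lemma same_gen_sum {n : ℕ} {F : Set (Euc (n+1))} {μ : Measure (Euc (n+1))} {Cl : ℝ}
    (L : DSLattice n F μ Cl) (j : ℤ) (T : Set (Cube n)) (A : Set (Euc (n+1)))
    (h : ∀ q ∈ T, L.mem q ∧ q.1 = j ∧ q.2 ⊆ A) :
    ∑' q : T, μ (q : Cube n).2 ≤ μ A := by
  refine (tsum_meas_le_meas_iUnion_of_disjoint μ (As := fun q : T => (q : Cube n).2)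
    (fun q => L.measurableSet _ _ (h q q.2).1) ?_).trans
    (measure_mono (iUnion_subset fun q => (h q q.2).2.2))
  intro a b hab
  obtain ⟨ha, ha1, -⟩ := h a a.2
  obtain ⟨hb, hb1, -⟩ := h b b.2
  refine L.disj j _ (ha1 ▸ ha) _ (hb1 ▸ hb) fun he => hab ?_
  exact Subtype.ext (Prod.ext (ha1.trans hb1.symm) he)

lemma topFam_subset {n : ℕ} {F : Set (Euc (n+1))} {μ : Measure (Euc (n+1))} {Cl : ℝ}
    (Ω : Set (Euc (n+1))) (L : DSLattice n F μ Cl) (p : Euc (n+1)) (R₀ : Cube n) (A ε : ℝ)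
    (k : ℕ) (q : Cube n) (hq : q ∈ TopFam Ω μ L p R₀ A ε k) : q ∈ Gfam Ω μ L p R₀ A := by
  cases k with
  | zero => exact hq.1
  | succ k => obtain ⟨R, _, _, h⟩ := hq; exact h

lemma top_packing_aux {n : ℕ} {Ω : Set (Euc (n+1))} {μ : Measure (Euc (n+1))} {Cl : ℝ}
    (L : DSLattice n (frontier Ω) μ Cl) (p : Euc (n+1)) (R₀ : Cube n) (A ε : ℝ) :
    (∑' q : TopAll Ω μ L p R₀ A ε, μ (q : Cube n).2) ≤ μ R₀.2 +
      ∑' q : {q : Cube n | InD L R₀ q ∧ ε < bbetaQ n L (frontier Ω) q}, μ (q : Cube n).2 := by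
  set B : Set (Cube n) := {q : Cube n | InD L R₀ q ∧ ε < bbetaQ n L (frontier Ω) q} with hB
  set T0 : Set (Cube n) := {q | L.mem q ∧ q.1 = R₀.1 + 10 ∧ q.2 ⊆ R₀.2} with hT0
  set ch : Cube n → Set (Cube n) := fun q' => {q | L.mem q ∧ q.1 = q'.1 + 1 ∧ q.2 ⊆ q'.2} with hch
  have hsub : TopAll Ω μ L p R₀ A ε ⊆ T0 ∪ ⋃ q' ∈ B, ch q' := by
    rintro q ⟨k, hk⟩
    have hG := topFam_subset Ω L p R₀ A ε k q hk
    cases k with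
    | zero => exact Or.inl ⟨hG.1.1, hk.2, hG.1.2.1⟩
    | succ k =>
      right
      obtain ⟨R, hR, hst, -⟩ := hk
      have hRG := topFam_subset Ω L p R₀ A ε k R hR
      obtain ⟨hqm, hqR, hgen, hbad, -⟩ := hst
      rcases hbad with hbad | ⟨q', ⟨hm', hg', hs'⟩, hbb⟩
      · exact absurd hG hbad
      have h1 : q'.2 ⊆ R.2 := by
        obtain ⟨x, hx⟩ := L.nonempty _ _ hqm
        exact L.nested _ _ (by omega) _ hm' _ hRG.1.1 ⟨x, hs' hx, hqR hx⟩
      refine mem_iUnion₂.2 ⟨q', ⟨⟨hm', h1.trans hRG.1.2.1, ?_⟩, hbb⟩, hqm, by omega, hs'⟩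
      have := hRG.1.2.2
      omega
  refine (ENNReal.tsum_mono_subtype (fun q : Cube n => μ q.2) hsub).trans
    ((ENNReal.tsum_union_le (fun q : Cube n => μ q.2) _ _).trans ?_)
  refine add_le_add (same_gen_sum L (R₀.1 + 10) T0 _ fun q hq => hq) ?_
  refine (ENNReal.tsum_biUnion_le_tsum (fun q : Cube n => μ q.2) _ _).trans ?_
  exact ENNReal.tsum_le_tsum fun q' => same_gen_sum L _ _ _ fun q hq => hq
/-- Under the standing assumptions, assuming in addition that `∂Ω` is
uniformly `n`-rectifiable, the family `Top` of the corona decomposition satisfies the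
Carleson packing condition `∑_{R ∈ Top} μ(R) ≤ M(ε) μ(R₀)`. -/
theorem top_packing_condition
    (n : ℕ) (hn : 2 ≤ n) (C₀ Cl c c' A θu Mu : ℝ) (hC₀ : 1 ≤ C₀) (hCl : 1 ≤ Cl)
    (hc : 0 < c) (hc' : 0 < c') (hA : 1 ≤ A) (D : ℝ → ℝ) :
    ∀ ε ∈ Set.Ioo (0:ℝ) 1, ∃ Mε : ℝ, 0 < Mε ∧
      ∀ (F : Set (Euc (n+1))), IsClosed F → ADRegular n C₀ F →
        UnifRectifiable n C₀ θu Mu F →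
      ∀ Ω : Set (Euc (n+1)), Ω = Fᶜ → frontier Ω = F →
      ∀ μ : Measure (Euc (n+1)), μ = (μH[n]).restrict (frontier Ω) →
      ∀ (L : DSLattice n (frontier Ω) μ Cl) (R₀ : Cube n) (p : Euc (n+1)),
        L.mem R₀ → p ∈ Ω → p ∉ cubeBall L 4 R₀ →
        c * sideLen R₀ ≤ infDist p (frontier Ω) →
        infDist p (frontier Ω) ≤ infDist p R₀.2 →
        infDist p R₀.2 ≤ c⁻¹ * sideLen R₀ →
        c' ≤ hMeasure Ω p R₀.2 →
        WeakAInftyBallWith n Ω p (L.center R₀.2) (4 * sideLen R₀) D →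
        (∑' q : TopAll Ω μ L p R₀ A ε, μ (q : Cube n).2) ≤
          ENNReal.ofReal Mε * μ R₀.2 := by
  intro ε hε
  by_cases hθ : 0 < θu
  swap
  · exact ⟨1, one_pos, fun F _ _ hUR => absurd hUR.2.1 hθ⟩
  obtain ⟨K, hK, hpack⟩ := bad_packing n (by omega) (M := Mu) hC₀ hCl hθ hε.1
  refine ⟨1 + K, by positivity, ?_⟩
  intro F hF _ hUR Ω _ hfr μ hμ L R₀ p hR₀ _ _ _ _ _ _ _
  subst hfr
  refine (top_packing_aux L p R₀ A ε).trans ?_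
  rw [ENNReal.ofReal_add zero_le_one hK.le, add_mul, ENNReal.ofReal_one, one_mul]
  exact add_le_add le_rfl (hpack _ hF hUR μ hμ L R₀ hR₀)


end HarmMeas
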